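/- Let H be a graph on [k], let ⋆ ∈ {ind, sub}, let ε ∈ (0,1) be fixed, and let (α,β) be either the vector with all α_i = 1/2 and all β_{ij} = 0, or the vector with all α_i = 0 and all β_{ij} = −1/d. Then Var( N^⋆(H; M_ε^{(α,β)}) ) / E[ N^⋆(H; M_ε^{(α,β)}) ]^2 → 0 as n → ∞. -/

import Mathlib

open MeasureTheory Filter Finset

noncomputable section

instance : Fact ((0:ℝ) < 1) := ⟨one_pos⟩

/-- The `d`-dimensional torus `ℝ^d/ℤ^d`, with the sup of coordinatewise circle distances. -/
abbrev Torus (d : ℕ) := Fin d → AddCircle (1 : ℝ)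

/-- Sample space of the GIRG on `n` vertices: weights, positions, and iid uniform
`[0,1]` coins deciding the presence of each potential edge. -/
abbrev GirgΩ (d n : ℕ) := (Fin n → ℝ) × (Fin n → Torus d) × (Sym2 (Fin n) → ℝ)

/-- The law of the randomness of the GIRG: iid weights with law `μW`, iid uniform positions
on the torus, iid uniform coins. -/
def girgMeasure (μW : Measure ℝ) (d n : ℕ) : Measure (GirgΩ d n) :=
  (Measure.pi fun _ : Fin n => μW).prod
    ((Measure.pi fun _ : Fin n => (volume : Measure (Torus d))).prod
      (Measure.pi fun _ : Sym2 (Fin n) => volume.restrict (Set.Icc (0:ℝ) 1)))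

/-- mean `μ = E[W]` of the weight distribution -/
def wMean (μW : Measure ℝ) : ℝ := ∫ x, x ∂μW

/-- Power-law tail assumption: `W ≥ 1` a.s. and `P(W > x) = c x^{1-τ} (1+o(1))` as `x → ∞`. -/
def WeightTail (τ c : ℝ) (μW : Measure ℝ) : Prop :=
  0 < c ∧ μW (Set.Iio 1) = 0 ∧
    Tendsto (fun x : ℝ => (μW (Set.Ioi x)).toReal / (c * x ^ (1 - τ))) atTop (nhds 1)

/-- GIRG connection probability `min(1, (w_u w_v / (n μ ‖x_u - x_v‖^d))^γ)`. -/
def connProb (γ μbar : ℝ) (d n : ℕ) (w : Fin n → ℝ) (x : Fin n → Torus d)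
    (u v : Fin n) : ℝ :=
  min 1 ((w u * w v / ((n : ℝ) * μbar * dist (x u) (x v) ^ d)) ^ γ)

/-- `u` and `v` are joined by an edge of the GIRG in outcome `ω`. -/
def girgEdge (γ μbar : ℝ) (d n : ℕ) (ω : GirgΩ d n) (u v : Fin n) : Prop :=
  u ≠ v ∧ ω.2.2 s(u, v) ≤ connProb γ μbar d n ω.1 ω.2.1 u v

/-- the window `[ε t, t/ε]` -/
def windowIcc (ε t : ℝ) : Set ℝ := Set.Icc (ε * t) (t / ε)

/-- The set `M_ε^{(α,β)}` of ordered `k`-tuples of distinct vertices with prescribed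
weights and inter-distances. -/
def Mset {k : ℕ} (ε : ℝ) (α : Fin k → ℝ) (β : Fin k → Fin k → ℝ) (d n : ℕ)
    (w : Fin n → ℝ) (x : Fin n → Torus d) : Set (Fin k → Fin n) :=
  {v | Function.Injective v ∧
    (∀ i, w (v i) ∈ windowIcc ε ((n : ℝ) ^ (α i))) ∧
    (∀ i j : Fin k, i < j → dist (x (v i)) (x (v j)) ∈ windowIcc ε ((n : ℝ) ^ (β i j)))}

/-- `N^{sub}(H; M_ε^{(α,β)})` -/
def nSubM {k : ℕ} (H : SimpleGraph (Fin k)) (γ μbar ε : ℝ) (α : Fin k → ℝ)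
    (β : Fin k → Fin k → ℝ) (d n : ℕ) (ω : GirgΩ d n) : ℕ :=
  Set.ncard {v : Fin k → Fin n | v ∈ Mset ε α β d n ω.1 ω.2.1 ∧
    ∀ i j : Fin k, H.Adj i j → girgEdge γ μbar d n ω (v i) (v j)}

/-- `N^{ind}(H; M_ε^{(α,β)})` -/
def nIndM {k : ℕ} (H : SimpleGraph (Fin k)) (γ μbar ε : ℝ) (α : Fin k → ℝ)
    (β : Fin k → Fin k → ℝ) (d n : ℕ) (ω : GirgΩ d n) : ℕ :=
  Set.ncard {v : Fin k → Fin n | v ∈ Mset ε α β d n ω.1 ω.2.1 ∧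
    ∀ i j : Fin k, i ≠ j → (H.Adj i j ↔ girgEdge γ μbar d n ω (v i) (v j))}

/-- `N^{sub}(H)` -/
def nSubTotal {k : ℕ} (H : SimpleGraph (Fin k)) (γ μbar : ℝ) (d n : ℕ)
    (ω : GirgΩ d n) : ℕ :=
  Set.ncard {v : Fin k → Fin n | Function.Injective v ∧
    ∀ i j : Fin k, H.Adj i j → girgEdge γ μbar d n ω (v i) (v j)}

/-- `N^{ind}(H)` -/
def nIndTotal {k : ℕ} (H : SimpleGraph (Fin k)) (γ μbar : ℝ) (d n : ℕ)
    (ω : GirgΩ d n) : ℕ :=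
  Set.ncard {v : Fin k → Fin n | Function.Injective v ∧
    ∀ i j : Fin k, i ≠ j → (H.Adj i j ↔ girgEdge γ μbar d n ω (v i) (v j))}

/-- `β` read as a symmetric matrix (only entries with `i < j` are meaningful). -/
def bsym {k : ℕ} (β : Fin k → Fin k → ℝ) (i j : Fin k) : ℝ := if i < j then β i j else β j i

/-- The feasible region `F`. -/
def Feasible (τ : ℝ) (d : ℕ) {k : ℕ} (α : Fin k → ℝ) (β : Fin k → Fin k → ℝ) : Prop :=
  (∀ i, α i ∈ Set.Icc (0 : ℝ) (1 / (τ - 1))) ∧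
  (∀ i j : Fin k, i < j → β i j ∈ Set.Icc (-(1 / (d : ℝ))) 0) ∧
  (∀ i j s : Fin k, i < j → s ≠ i → s ≠ j → β i j ≤ max (bsym β i s) (bsym β j s))

/-- `min_{i<j} β_{ij}` (with value `0 = sInf ∅` for the first vertex `j`,
which does not contribute). -/
def minBeta {k : ℕ} (β : Fin k → Fin k → ℝ) (j : Fin k) : ℝ :=
  sInf {x : ℝ | ∃ i, i < j ∧ x = β i j}

open scoped Classical in
/-- The exponent `f_H(α,β)`. -/
def fExp (τ γ : ℝ) (d : ℕ) {k : ℕ} (H : SimpleGraph (Fin k))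
    (α : Fin k → ℝ) (β : Fin k → Fin k → ℝ) : ℝ :=
  (k : ℝ) + (1 - τ) * ∑ i, α i + (d : ℝ) * ∑ j, minBeta β j +
    γ * ∑ p ∈ Finset.univ.filter (fun p : Fin k × Fin k => p.1 < p.2 ∧ H.Adj p.1 p.2),
        min (α p.1 + α p.2 - (d : ℝ) * β p.1 p.2 - 1) 0

/-- Extra constraints for the induced optimization problem:
`α_i + α_j ≤ 1 + d β_{ij}` for all non-edges. -/
def IndConstr (d : ℕ) {k : ℕ} (H : SimpleGraph (Fin k)) (α : Fin k → ℝ)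
    (β : Fin k → Fin k → ℝ) : Prop :=
  ∀ i j : Fin k, i < j → ¬H.Adj i j → α i + α j ≤ 1 + (d : ℝ) * β i j

/-- `(α,β)` is an optimal solution of the general optimization problem. -/
def IsOptimalSub (τ γ : ℝ) (d : ℕ) {k : ℕ} (H : SimpleGraph (Fin k))
    (α : Fin k → ℝ) (β : Fin k → Fin k → ℝ) : Prop :=
  Feasible τ d α β ∧
    ∀ α' β', Feasible τ d α' β' → fExp τ γ d H α' β' ≤ fExp τ γ d H α β

/-- `(α,β)` is an optimal solution of the induced optimization problem. -/
def IsOptimalInd (τ γ : ℝ) (d : ℕ) {k : ℕ} (H : SimpleGraph (Fin k))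
    (α : Fin k → ℝ) (β : Fin k → Fin k → ℝ) : Prop :=
  Feasible τ d α β ∧ IndConstr d H α β ∧
    ∀ α' β', Feasible τ d α' β' → IndConstr d H α' β' →
      fExp τ γ d H α' β' ≤ fExp τ γ d H α β

/-- the two kinds of subgraph counts -/
inductive StarKind | ind | sub

/-- `N^⋆(H; M_ε^{(α,β)})` -/
def starNM (s : StarKind) {k : ℕ} (H : SimpleGraph (Fin k)) (γ μbar ε : ℝ) (α : Fin k → ℝ)
    (β : Fin k → Fin k → ℝ) (d n : ℕ) (ω : GirgΩ d n) : ℕ :=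
  match s with
  | .sub => nSubM H γ μbar ε α β d n ω
  | .ind => nIndM H γ μbar ε α β d n ω

/-- `N^⋆(H)` -/
def starNTotal (s : StarKind) {k : ℕ} (H : SimpleGraph (Fin k)) (γ μbar : ℝ) (d n : ℕ)
    (ω : GirgΩ d n) : ℕ :=
  match s with
  | .sub => nSubTotal H γ μbar d n ω
  | .ind => nIndTotal H γ μbar d n ω

/-- optimality in the optimization problem corresponding to `⋆` -/
def starIsOptimal (s : StarKind) (τ γ : ℝ) (d : ℕ) {k : ℕ} (H : SimpleGraph (Fin k))
    (α : Fin k → ℝ) (β : Fin k → Fin k → ℝ) : Prop :=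
  match s with
  | .sub => IsOptimalSub τ γ d H α β
  | .ind => IsOptimalInd τ γ d H α β

/-- the optimal value `f_H^*` of the optimization problem corresponding to `⋆` -/
def starOptVal (s : StarKind) (τ γ : ℝ) (d : ℕ) {k : ℕ} (H : SimpleGraph (Fin k)) : ℝ :=
  match s with
  | .sub => sSup {x | ∃ α β, Feasible τ d α β ∧ x = fExp τ γ d H α β}
  | .ind => sSup {x | ∃ α β, Feasible τ d α β ∧ IndConstr d H α β ∧ x = fExp τ γ d H α β}

/-- `(α,β)` is the unique optimal solution (in the `α`-variables and the
`β`-variables with `i < j`). -/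
def UniquelyOptimal (s : StarKind) (τ γ : ℝ) (d : ℕ) {k : ℕ} (H : SimpleGraph (Fin k))
    (α : Fin k → ℝ) (β : Fin k → Fin k → ℝ) : Prop :=
  starIsOptimal s τ γ d H α β ∧
    ∀ α' β', starIsOptimal s τ γ d H α' β' →
      α' = α ∧ ∀ i j : Fin k, i < j → β' i j = β i j



lemma mp_comp_inj {X : Type*} [MeasurableSpace X] (ν : Measure X) [IsProbabilityMeasure ν]
    {ι κ : Type*} [Fintype ι] [Fintype κ] (f : κ → ι) (hf : Function.Injective f) :
    MeasurePreserving (fun x : ι → X => x ∘ f) (Measure.pi fun _ => ν)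
      (Measure.pi fun _ => ν) := by
  refine ⟨by fun_prop, ?_⟩
  have h1 : ProbabilityTheory.iIndepFun (fun (i : ι) (x : ι → X) => x i)
      (Measure.pi fun _ : ι => ν) :=
    ProbabilityTheory.iIndepFun_pi (X := fun _ x => x) (fun _ => aemeasurable_id)
  have h2 := h1.precomp hf
  have h3 := (ProbabilityTheory.iIndepFun_iff_map_fun_eq_pi_map
    (fun i => (measurable_pi_apply (f i)).aemeasurable)).1 h2
  have h4 : ∀ i : κ, Measure.map (fun x : ι → X => x (f i)) (Measure.pi fun _ => ν) = ν :=
    fun i => (measurePreserving_eval (fun _ => ν) (f i)).map_eq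
  change Measure.map (fun (x : ι → X) (i : κ) => x (f i)) _ = _
  rw [h3]
  congr 1
  ext i : 1
  exact h4 i

lemma mp_pair {X : Type*} [MeasurableSpace X] (ν : Measure X) [IsProbabilityMeasure ν]
    {ι κ κ' : Type*} [Fintype ι] [Fintype κ] [Fintype κ'] (f : κ → ι) (g : κ' → ι)
    (hf : Function.Injective f) (hg : Function.Injective g) (hd : ∀ a b, f a ≠ g b) :
    MeasurePreserving (fun x : ι → X => (x ∘ f, x ∘ g)) (Measure.pi fun _ => ν)
      ((Measure.pi fun _ => ν).prod (Measure.pi fun _ => ν)) := by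
  have h1 := mp_comp_inj ν (Sum.elim f g) (hf.sumElim hg hd)
  have h2 := measurePreserving_sumPiEquivProdPi (ι := κ) (ι' := κ') (X := fun _ => X)
    (fun _ => ν)
  exact h2.comp h1

lemma mp_rearr {A A' B B' : Type*} [MeasurableSpace A] [MeasurableSpace A'] [MeasurableSpace B]
    [MeasurableSpace B'] (a : Measure A) (a' : Measure A') (b : Measure B) (b' : Measure B')
    [IsProbabilityMeasure a] [IsProbabilityMeasure a'] [IsProbabilityMeasure b]
    [IsProbabilityMeasure b'] :
    MeasurePreserving (fun p : (A × A') × (B × B') => ((p.1.1, p.2.1), (p.1.2, p.2.2)))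
      ((a.prod a').prod (b.prod b')) ((a.prod b).prod (a'.prod b')) := by
  have s1 := measurePreserving_prodAssoc a a' (b.prod b')
  have s2 := (measurePreserving_prodAssoc a' b b').symm
  have s3 := (Measure.measurePreserving_swap (μ := a') (ν := b)).prod (MeasurePreserving.id b')
  have s4 := measurePreserving_prodAssoc b a' b'
  have s5 := (measurePreserving_prodAssoc a b (a'.prod b')).symm
  have s6 := (MeasurePreserving.id a).prod (s4.comp (s3.comp s2))
  exact s5.comp (s6.comp s1)

instance torusProb (d : ℕ) : IsProbabilityMeasure (volume : Measure (Torus d)) := by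
  have : IsProbabilityMeasure (volume : Measure (AddCircle (1:ℝ))) := ⟨by simp [AddCircle.measure_univ]⟩
  unfold Torus
  infer_instance

instance coinProb : IsProbabilityMeasure (volume.restrict (Set.Icc (0:ℝ) 1)) :=
  ⟨by simp⟩

instance girgProb (μW : Measure ℝ) [IsProbabilityMeasure μW] (d n : ℕ) :
    IsProbabilityMeasure (girgMeasure μW d n) := by
  unfold girgMeasure; infer_instance

def gproj {k n : ℕ} (d : ℕ) (v : Fin k → Fin n) (ω : GirgΩ d n) : GirgΩ d k :=
  (ω.1 ∘ v, ω.2.1 ∘ v, ω.2.2 ∘ Sym2.map v)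

lemma gproj_mp (μW : Measure ℝ) [IsProbabilityMeasure μW] (d : ℕ) {k n : ℕ} (v : Fin k → Fin n)
    (hv : Function.Injective v) :
    MeasurePreserving (gproj d v) (girgMeasure μW d n) (girgMeasure μW d k) :=
  (mp_comp_inj μW v hv).prod ((mp_comp_inj (volume : Measure (Torus d)) v hv).prod
    (mp_comp_inj (volume.restrict (Set.Icc (0:ℝ) 1)) (Sym2.map v) (Sym2.map.injective hv)))

lemma gproj_pair (μW : Measure ℝ) [IsProbabilityMeasure μW] (d : ℕ) {k n : ℕ}
    (v v' : Fin k → Fin n)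
    (hv : Function.Injective v) (hv' : Function.Injective v') (hd : ∀ a b, v a ≠ v' b) :
    MeasurePreserving (fun ω => (gproj d v ω, gproj d v' ω)) (girgMeasure μW d n)
      ((girgMeasure μW d k).prod (girgMeasure μW d k)) := by
  have h1 := mp_pair μW v v' hv hv' hd
  have h2 := mp_pair (volume : Measure (Torus d)) v v' hv hv' hd
  have h3 := mp_pair (volume.restrict (Set.Icc (0:ℝ) 1)) (Sym2.map v) (Sym2.map v')
    (Sym2.map.injective hv) (Sym2.map.injective hv') (by
      intro a b hab
      induction a with | h a1 a2 => 
      have : v a1 ∈ Sym2.map v' b := by rw [← hab]; simp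
      rw [Sym2.mem_map] at this
      obtain ⟨c, _, hc⟩ := this
      exact hd a1 c hc.symm)
  exact (mp_rearr _ _ _ _).comp (h1.prod ((mp_rearr _ _ _ _).comp (h2.prod h3)))

lemma gproj_indep (μW : Measure ℝ) [IsProbabilityMeasure μW] (d : ℕ) {k n : ℕ}
    (v v' : Fin k → Fin n)
    (hv : Function.Injective v) (hv' : Function.Injective v') (hd : ∀ a b, v a ≠ v' b)
    (E : Set (GirgΩ d k)) (hE : MeasurableSet E) :
    (girgMeasure μW d n).real (gproj d v ⁻¹' E ∩ gproj d v' ⁻¹' E) =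
      (girgMeasure μW d k).real E * (girgMeasure μW d k).real E := by
  have := (gproj_pair μW d v v' hv hv' hd).measure_preimage (hE.prod hE).nullMeasurableSet
  rw [Measure.prod_prod] at this
  simp only [measureReal_def, ← ENNReal.toReal_mul, ← this]
  rfl

open scoped Classical in
lemma card_pairs_le (k n m : ℕ) :
    ((Finset.univ : Finset ((Fin k → Fin n) × (Fin k → Fin n))).filter
      (fun p => (Finset.univ.image p.1 ∪ Finset.univ.image p.2).card = m)).card
      ≤ n ^ m * (m ^ k * m ^ k) := by
  have : ((Finset.univ : Finset ((Fin k → Fin n) × (Fin k → Fin n))).filter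
      (fun p => (Finset.univ.image p.1 ∪ Finset.univ.image p.2).card = m)) ⊆
      (Finset.univ : Finset ((Fin m → Fin n) × ((Fin k → Fin m) × (Fin k → Fin m)))).image
        (fun q => (q.1 ∘ q.2.1, q.1 ∘ q.2.2)) := by
    intro p hp
    simp only [Finset.mem_filter, Finset.mem_univ, true_and] at hp
    let e := Finset.equivFinOfCardEq hp
    simp only [Finset.mem_image, Finset.mem_univ, true_and]
    refine ⟨(fun i => (e.symm i : Fin n), (fun i => e ⟨p.1 i, by simp⟩, fun i => e ⟨p.2 i, by simp⟩)), ?_⟩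
    ext i <;> simp
  refine (Finset.card_le_card this).trans (Finset.card_image_le.trans ?_)
  simp [Fintype.card_prod, Fintype.card_pi]

open scoped Classical in
lemma second_moment {Ω : Type*} [MeasurableSpace Ω] (P : Measure Ω) [IsProbabilityMeasure P]
    {k n : ℕ} (A : (Fin k → Fin n) → Set Ω) (hA : ∀ v, MeasurableSet (A v)) (N : Ω → ℕ)
    (hN : ∀ ω, N ω = Set.ncard {v : Fin k → Fin n | Function.Injective v ∧ ω ∈ A v})
    (p : ℝ) (hp : ∀ v, Function.Injective v → P.real (A v) = p)
    (hdisj : ∀ v v' : Fin k → Fin n, Function.Injective v → Function.Injective v' →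
      (∀ a b, v a ≠ v' b) → P.real (A v ∩ A v') = p * p)
    (B : ℕ → ℝ) (hB0 : ∀ m, 0 ≤ B m)
    (hB : ∀ v v' : Fin k → Fin n, Function.Injective v → Function.Injective v' →
      (∃ a b, v a = v' b) →
      P.real (A v ∩ A v') ≤ B (Finset.univ.image v ∪ Finset.univ.image v').card) :
    (∫ ω, (N ω : ℝ) ∂P) = (n.descFactorial k : ℝ) * p ∧
    ProbabilityTheory.variance (fun ω => (N ω : ℝ)) P ≤
      ∑ m ∈ Finset.Ico k (2 * k), ((2 * k : ℝ) ^ k * (2 * k : ℝ) ^ k) * ((n : ℝ) ^ m * B m) := by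
  set I : Finset (Fin k → Fin n) := Finset.univ.filter Function.Injective with hI
  have hNs : ∀ ω, (N ω : ℝ) = ∑ v ∈ I, (A v).indicator (fun _ => (1:ℝ)) ω := by
    intro ω
    rw [hN ω]
    have : {v : Fin k → Fin n | Function.Injective v ∧ ω ∈ A v} =
        ((I.filter (fun v => ω ∈ A v) : Finset _) : Set (Fin k → Fin n)) := by
      ext v; simp [hI]
    rw [this, Set.ncard_coe_finset]
    simp [Set.indicator_apply, Finset.sum_ite]
  have hcard : (I.card : ℝ) = n.descFactorial k := by
    have := Fintype.card_embedding_eq (α := Fin k) (β := Fin n)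
    simp only [Fintype.card_fin] at this
    rw [← this, hI, ← Fintype.card_subtype]
    norm_cast
    exact Fintype.card_congr (Equiv.subtypeInjectiveEquivEmbedding _ _)
  have hint : ∀ S : Set Ω, MeasurableSet S → Integrable (S.indicator (fun _ => (1:ℝ))) P :=
    fun S hS => (integrable_const (1:ℝ)).indicator hS
  have hiv : ∀ S : Set Ω, MeasurableSet S → ∫ ω, S.indicator (fun _ => (1:ℝ)) ω ∂P = P.real S := by
    intro S hS
    simpa using integral_indicator_const (μ := P) (1:ℝ) hS
  have hE : (∫ ω, (N ω : ℝ) ∂P) = (n.descFactorial k : ℝ) * p := by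
    simp only [hNs]
    rw [integral_finset_sum _ (fun v _ => hint _ (hA v))]
    simp only [hiv _ (hA _)]
    rw [Finset.sum_congr rfl (fun v hv => hp v (by simpa [hI] using hv))]
    simp [hcard]
  refine ⟨hE, ?_⟩
  have hmem : MemLp (fun ω => (N ω : ℝ)) 2 P := by
    simp only [hNs]
    refine memLp_finset_sum _ (fun v _ => ?_)
    exact memLp_indicator_const 2 (hA v) 1 (Or.inr (measure_ne_top _ _))
  have hsq : ∀ ω, (N ω : ℝ) ^ 2 = ∑ q ∈ I ×ˢ I, (A q.1 ∩ A q.2).indicator (fun _ => (1:ℝ)) ω := by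
    intro ω
    rw [hNs, sq, Finset.sum_mul_sum, Finset.sum_product]
    refine Finset.sum_congr rfl fun v _ => Finset.sum_congr rfl fun w _ => ?_
    simp only [Set.indicator_apply, Set.mem_inter_iff]
    split_ifs <;> simp_all
  have hE2 : (∫ ω, (N ω : ℝ) ^ 2 ∂P) = ∑ q ∈ I ×ˢ I, P.real (A q.1 ∩ A q.2) := by
    simp only [hsq]
    rw [integral_finset_sum _ (fun v _ => hint _ ((hA _).inter (hA _)))]
    simp only [hiv _ ((hA _).inter (hA _))]
  rw [ProbabilityTheory.variance_eq_sub hmem]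
  simp only [Pi.pow_apply]
  rw [hE2, hE, ← hcard]
  set D := (I ×ˢ I).filter (fun q => ∀ a b, q.1 a ≠ q.2 b) with hD
  set D' := (I ×ˢ I).filter (fun q => ¬ ∀ a b, q.1 a ≠ q.2 b) with hD'
  rw [← Finset.sum_filter_add_sum_filter_not (I ×ˢ I) (fun q => ∀ a b, q.1 a ≠ q.2 b)]
  have h1 : ∑ q ∈ D, P.real (A q.1 ∩ A q.2) ≤ ((I.card : ℝ) * p) ^ 2 := by
    rw [Finset.sum_congr rfl (g := fun _ => p * p)]
    · simp only [Finset.sum_const, nsmul_eq_mul]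
      have : (D.card : ℝ) ≤ I.card * I.card := by
        rw [← Nat.cast_mul, ← Finset.card_product]
        exact_mod_cast Finset.card_filter_le _ _
      nlinarith [mul_self_nonneg p]
    · intro q hq
      simp only [hD, hI, Finset.mem_filter, Finset.mem_product, Finset.mem_univ, true_and] at hq
      exact hdisj _ _ hq.1.1 hq.1.2 hq.2
  have h2 : ∑ q ∈ D', P.real (A q.1 ∩ A q.2) ≤
      ∑ m ∈ Finset.Ico k (2 * k), ((2 * k : ℝ) ^ k * (2 * k : ℝ) ^ k) * ((n : ℝ) ^ m * B m) := by
    have hle : ∑ q ∈ D', P.real (A q.1 ∩ A q.2) ≤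
        ∑ q ∈ D', B (Finset.univ.image q.1 ∪ Finset.univ.image q.2).card := by
      refine Finset.sum_le_sum fun q hq => ?_
      simp only [hD', hI, Finset.mem_filter, Finset.mem_product, Finset.mem_univ, true_and] at hq
      refine hB _ _ hq.1.1 hq.1.2 ?_
      have := hq.2
      push Not at this
      exact this
    refine hle.trans ?_
    rw [← Finset.sum_fiberwise_of_maps_to (s := D') (t := Finset.Ico k (2*k))
      (g := fun q => (Finset.univ.image q.1 ∪ Finset.univ.image q.2).card)]
    · refine Finset.sum_le_sum fun m hm => ?_
      rw [Finset.sum_congr rfl (g := fun _ => B m)]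
      · simp only [Finset.sum_const, nsmul_eq_mul]
        have hc : ((D'.filter (fun q =>
            (Finset.univ.image q.1 ∪ Finset.univ.image q.2).card = m)).card : ℝ)
            ≤ (n:ℝ) ^ m * ((m:ℝ) ^ k * (m:ℝ) ^ k) := by
          have := card_pairs_le k n m
          have h' := (Finset.card_le_card (Finset.filter_subset_filter (fun q : (Fin k → Fin n) × (Fin k → Fin n) =>
            (Finset.univ.image q.1 ∪ Finset.univ.image q.2).card = m) (Finset.subset_univ D'))).trans this
          exact_mod_cast h'
        have hm2 : (m:ℝ) ≤ 2 * k := by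
          have := (Finset.mem_Ico.1 hm).2
          exact_mod_cast this.le
        have h3 : (m:ℝ) ^ k * (m:ℝ)^k ≤ (2 * k : ℝ) ^ k * (2 * k : ℝ) ^ k := by gcongr
        calc _ ≤ (n:ℝ) ^ m * ((m:ℝ) ^ k * (m:ℝ) ^ k) * B m := by
              exact mul_le_mul_of_nonneg_right hc (hB0 m)
          _ ≤ (n:ℝ) ^ m * ((2 * k : ℝ) ^ k * (2 * k : ℝ) ^ k) * B m := by
              have := hB0 m
              gcongr
          _ = _ := by ring
      · intro q hq
        rw [(Finset.mem_filter.1 hq).2]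
    · intro q hq
      simp only [hD', hI, Finset.mem_filter, Finset.mem_product, Finset.mem_univ, true_and] at hq
      obtain ⟨⟨hq1, hq2⟩, hq3⟩ := hq
      push Not at hq3
      obtain ⟨a, b, hab⟩ := hq3
      have c1 : (Finset.univ.image q.1).card = k := by
        rw [Finset.card_image_of_injective _ hq1]; simp
      have c2 : (Finset.univ.image q.2).card = k := by
        rw [Finset.card_image_of_injective _ hq2]; simp
      have c3 := Finset.card_union_add_card_inter (Finset.univ.image q.1) (Finset.univ.image q.2)
      have c4 : 0 < (Finset.univ.image q.1 ∩ Finset.univ.image q.2).card := by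
        refine Finset.card_pos.2 ⟨q.1 a, ?_⟩
        rw [Finset.mem_inter]
        exact ⟨by simp, by rw [hab]; simp⟩
      have c5 := Finset.card_le_card (Finset.subset_union_left (s₁ := Finset.univ.image q.1) (s₂ := Finset.univ.image q.2))
      rw [Finset.mem_Ico]
      omega
  linarith

def gcp (γ μbar : ℝ) (d n : ℕ) (a b r : ℝ) : ℝ :=
  min 1 ((a * b / ((n : ℝ) * μbar * r ^ d)) ^ γ)

def nonE (s : StarKind) {k : ℕ} (H : SimpleGraph (Fin k)) (i j : Fin k) : Prop :=
  s = StarKind.ind ∧ i ≠ j ∧ ¬ H.Adj i j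

def gE (s : StarKind) {k : ℕ} (H : SimpleGraph (Fin k)) (γ μbar ε : ℝ) (α : Fin k → ℝ)
    (β : Fin k → Fin k → ℝ) (d n : ℕ) : Set (GirgΩ d k) :=
  {ω | (∀ i, ω.1 i ∈ windowIcc ε ((n : ℝ) ^ (α i))) ∧
    (∀ i j : Fin k, i < j → dist (ω.2.1 i) (ω.2.1 j) ∈ windowIcc ε ((n : ℝ) ^ (β i j))) ∧
    (∀ i j : Fin k, H.Adj i j →
      ω.2.2 s(i, j) ≤ gcp γ μbar d n (ω.1 i) (ω.1 j) (dist (ω.2.1 i) (ω.2.1 j))) ∧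
    (∀ i j : Fin k, nonE s H i j →
      gcp γ μbar d n (ω.1 i) (ω.1 j) (dist (ω.2.1 i) (ω.2.1 j)) < ω.2.2 s(i, j))}

lemma gE_measurable (s : StarKind) {k : ℕ} (H : SimpleGraph (Fin k)) (γ μbar ε : ℝ) (α : Fin k → ℝ)
    (β : Fin k → Fin k → ℝ) (d n : ℕ) : MeasurableSet (gE s H γ μbar ε α β d n) := by
  have h1 : ∀ i : Fin k, Measurable (fun ω : GirgΩ d k => ω.1 i) := fun i => by fun_prop
  have h2 : ∀ i j : Fin k, Measurable (fun ω : GirgΩ d k => dist (ω.2.1 i) (ω.2.1 j)) := by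
    intro i j
    have : Measurable (fun ω : GirgΩ d k => ω.2.1 i) := by fun_prop
    have h' : Measurable (fun ω : GirgΩ d k => ω.2.1 j) := by fun_prop
    exact this.dist h'
  have h3 : ∀ e : Sym2 (Fin k), Measurable (fun ω : GirgΩ d k => ω.2.2 e) := fun i => by fun_prop
  have h4 : ∀ i j : Fin k, Measurable (fun ω : GirgΩ d k =>
      gcp γ μbar d n (ω.1 i) (ω.1 j) (dist (ω.2.1 i) (ω.2.1 j))) := by
    intro i j
    unfold gcp
    exact measurable_const.min ((((h1 i).mul (h1 j)).div (((h2 i j).pow_const d).const_mul _)).pow_const γ)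
  unfold gE
  simp only [Set.ofPred_and, Set.ofPred_forall]
  refine MeasurableSet.inter ?_ (MeasurableSet.inter ?_ (MeasurableSet.inter ?_ ?_))
  · exact MeasurableSet.iInter fun i => (h1 i) measurableSet_Icc
  · exact MeasurableSet.iInter fun i => MeasurableSet.iInter fun j => MeasurableSet.iInter fun _ =>
      (h2 i j) measurableSet_Icc
  · exact MeasurableSet.iInter fun i => MeasurableSet.iInter fun j => MeasurableSet.iInter fun _ =>
      measurableSet_le (h3 _) (h4 i j)
  · exact MeasurableSet.iInter fun i => MeasurableSet.iInter fun j => MeasurableSet.iInter fun _ =>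
      measurableSet_lt (h4 i j) (h3 _)

lemma starNM_eq (s : StarKind) {k : ℕ} (H : SimpleGraph (Fin k)) (γ μbar ε : ℝ) (α : Fin k → ℝ)
    (β : Fin k → Fin k → ℝ) (d n : ℕ) (ω : GirgΩ d n) :
    starNM s H γ μbar ε α β d n ω =
      Set.ncard {v : Fin k → Fin n | Function.Injective v ∧
        ω ∈ gproj d v ⁻¹' gE s H γ μbar ε α β d n} := by
  have hne : ∀ v : Fin k → Fin n, Function.Injective v → ∀ i j, i ≠ j →
      (girgEdge γ μbar d n ω (v i) (v j) ↔ (gproj d v ω).2.2 s(i, j) ≤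
        gcp γ μbar d n ((gproj d v ω).1 i) ((gproj d v ω).1 j)
          (dist ((gproj d v ω).2.1 i) ((gproj d v ω).2.1 j))) := by
    intro v hv i j hij
    unfold girgEdge
    constructor
    · intro h; exact h.2
    · intro h; exact ⟨fun h' => hij (hv h'), h⟩
  cases s with
  | sub =>
    change nSubM H γ μbar ε α β d n ω = _
    unfold nSubM
    refine congrArg Set.ncard ?_
    ext v
    simp only [Set.mem_ofPred_eq, Set.mem_preimage, Mset, gE, nonE]
    constructor
    · rintro ⟨⟨hv, h1, h2⟩, h3⟩
      exact ⟨hv, h1, h2, fun i j hij => (hne v hv i j hij.ne).1 (h3 i j hij), by simp⟩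
    · rintro ⟨hv, h1, h2, h3, -⟩
      exact ⟨⟨hv, h1, h2⟩, fun i j hij => (hne v hv i j hij.ne).2 (h3 i j hij)⟩
  | ind =>
    change nIndM H γ μbar ε α β d n ω = _
    unfold nIndM
    refine congrArg Set.ncard ?_
    ext v
    simp only [Set.mem_ofPred_eq, Set.mem_preimage, Mset, gE, nonE]
    constructor
    · rintro ⟨⟨hv, h1, h2⟩, h3⟩
      refine ⟨hv, h1, h2, fun i j hij => (hne v hv i j hij.ne).1 ((h3 i j hij.ne).1 hij), ?_⟩
      rintro i j ⟨-, hij, hn⟩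
      rw [← not_le, ← hne v hv i j hij, ← h3 i j hij]
      exact hn
    · rintro ⟨hv, h1, h2, h3, h4⟩
      refine ⟨⟨hv, h1, h2⟩, fun i j hij => ⟨fun h => (hne v hv i j hij).2 (h3 i j h), fun h => ?_⟩⟩
      by_contra hn
      have := h4 i j ⟨trivial, hij, hn⟩
      rw [hne v hv i j hij] at h
      exact absurd h (not_le.2 this)

open scoped Classical in
lemma main_reduction {k d : ℕ} (γ μbar : ℝ) 
    (μW : Measure ℝ) [IsProbabilityMeasure μW] 
    (H : SimpleGraph (Fin k)) (s : StarKind) (ε : ℝ) 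
    (α : Fin k → ℝ) (β : Fin k → Fin k → ℝ)
    (B : ℕ → ℕ → ℝ) (hB0 : ∀ n m, 0 ≤ B n m)
    (hB : ∀ᶠ n : ℕ in atTop, ∀ v v' : Fin k → Fin n, Function.Injective v → Function.Injective v' →
      (∃ a b, v a = v' b) →
      (girgMeasure μW d n).real (gproj d v ⁻¹' gE s H γ μbar ε α β d n ∩
        gproj d v' ⁻¹' gE s H γ μbar ε α β d n) ≤
        B n (Finset.univ.image v ∪ Finset.univ.image v').card)
    (hlow : (∀ᶠ n : ℕ in atTop, (girgMeasure μW d k).real (gE s H γ μbar ε α β d n) = 0) ∨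
      ∃ q : ℕ → ℝ, (∀ᶠ n : ℕ in atTop, 0 < q n ∧
        q n ≤ (girgMeasure μW d k).real (gE s H γ μbar ε α β d n)) ∧
        ∀ m ∈ Finset.Ico k (2 * k),
          Tendsto (fun n : ℕ => (n : ℝ) ^ m * B n m / ((n : ℝ) ^ k * q n) ^ 2) atTop (nhds 0)) :
    Tendsto (fun n : ℕ =>
        ProbabilityTheory.variance
            (fun ω => (starNM s H γ μbar ε α β d n ω : ℝ)) (girgMeasure μW d n) /
          (∫ ω, (starNM s H γ μbar ε α β d n ω : ℝ) ∂(girgMeasure μW d n)) ^ 2)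
      atTop (nhds 0) := by
  have hme := fun n => gE_measurable s H γ μbar ε α β d n
  have key : ∀ᶠ n : ℕ in atTop, 
      (∫ ω, (starNM s H γ μbar ε α β d n ω : ℝ) ∂(girgMeasure μW d n)) =
        (n.descFactorial k : ℝ) * (girgMeasure μW d k).real (gE s H γ μbar ε α β d n) ∧
      ProbabilityTheory.variance (fun ω => (starNM s H γ μbar ε α β d n ω : ℝ))
        (girgMeasure μW d n) ≤
      ∑ m ∈ Finset.Ico k (2 * k),
        ((2 * k : ℝ) ^ k * (2 * k : ℝ) ^ k) * ((n : ℝ) ^ m * B n m) := by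
    filter_upwards [hB] with n hBn
    refine second_moment (girgMeasure μW d n) (fun v => gproj d v ⁻¹' gE s H γ μbar ε α β d n)
      ?_ _ (fun ω => starNM_eq s H γ μbar ε α β d n ω) _ ?_ ?_ (B n) (hB0 n) hBn
    · intro v
      have : Measurable (gproj d v) := by unfold gproj; fun_prop
      exact this (hme n)
    · intro v hv
      simp only [measureReal_def]
      rw [(gproj_mp μW d v hv).measure_preimage (hme n).nullMeasurableSet]
    · intro v v' hv hv' hd
      exact gproj_indep μW d v v' hv hv' hd _ (hme n)
  rcases hlow with h0 | ⟨q, hq, hlim⟩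
  · refine Tendsto.congr' ?_ tendsto_const_nhds
    filter_upwards [key, h0] with n hn h0n
    rw [hn.1, h0n]; simp
  · have hlim2 : Tendsto (fun n : ℕ => ∑ m ∈ Finset.Ico k (2 * k),
        ((2 * k : ℝ) ^ k * (2 * k : ℝ) ^ k) * (4 ^ k) *
          ((n : ℝ) ^ m * B n m / ((n : ℝ) ^ k * q n) ^ 2)) atTop (nhds 0) := by
      rw [show (0:ℝ) = ∑ m ∈ Finset.Ico k (2 * k),
        ((2 * k : ℝ) ^ k * (2 * k : ℝ) ^ k) * (4 ^ k) * 0 by simp]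
      exact tendsto_finsetSum _ fun m hm => (hlim m hm).const_mul _
    refine squeeze_zero' (Eventually.of_forall fun n => div_nonneg
      (ProbabilityTheory.variance_nonneg _ _) (sq_nonneg _)) ?_ hlim2
    filter_upwards [key, hq, eventually_ge_atTop (2 * k + 1)] with n hn hqn hnk
    rw [hn.1]
    have hn0 : (0:ℝ) < n := by exact_mod_cast (by omega : 0 < n)
    have hdesc : ((n:ℝ) / 2) ^ k ≤ n.descFactorial k := by
      have h1 := n.pow_sub_le_descFactorial k
      have h2 : (n:ℝ)/2 ≤ ((n + 1 - k : ℕ) : ℝ) := by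
        rw [div_le_iff₀ (by norm_num)]
        exact_mod_cast (by omega : n ≤ (n + 1 - k) * 2)
      calc ((n:ℝ) / 2) ^ k ≤ ((n + 1 - k : ℕ) : ℝ) ^ k := by gcongr
        _ ≤ _ := by exact_mod_cast h1
    have hlo : ((n:ℝ)/2) ^ k * q n ≤ (n.descFactorial k : ℝ) *
        (girgMeasure μW d k).real (gE s H γ μbar ε α β d n) := by
      have := hqn.1
      have := hqn.2
      gcongr
    have hpos : 0 < ((n:ℝ)/2) ^ k * q n := mul_pos (by positivity) hqn.1
    calc _ ≤ (∑ m ∈ Finset.Ico k (2 * k),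
        ((2 * k : ℝ) ^ k * (2 * k : ℝ) ^ k) * ((n : ℝ) ^ m * B n m)) / (((n:ℝ)/2) ^ k * q n) ^ 2 := by
          apply div_le_div₀ _ hn.2 (by positivity)
          · gcongr
          · exact Finset.sum_nonneg fun m _ => by have := hB0 n m; positivity
      _ = _ := by
        rw [Finset.sum_div]
        refine Finset.sum_congr rfl fun m _ => ?_
        have := hqn.1.ne'
        rw [div_pow, show (4:ℝ) = 2 ^ 2 by norm_num, ← pow_mul, mul_comm 2 k, pow_mul]
        field_simp

lemma tail_lim {τ c : ℝ} {μW : Measure ℝ} (hW : WeightTail τ c μW) {a : ℝ} (ha : 0 < a) :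
    Tendsto (fun t : ℝ => t ^ (τ - 1) * μW.real (Set.Ioi (a * t))) atTop
      (nhds (c * a ^ (1 - τ))) := by
  obtain ⟨hc, -, h⟩ := hW
  have h1 : Tendsto (fun t : ℝ => a * t) atTop atTop := tendsto_id.const_mul_atTop ha
  have h2 := (h.comp h1).mul_const (c * a ^ (1 - τ))
  rw [one_mul] at h2
  refine h2.congr' ?_
  filter_upwards [eventually_gt_atTop 0] with t ht
  simp only [Function.comp]
  rw [Real.mul_rpow ha.le ht.le, measureReal_def]
  have h3 : t ^ (τ - 1) = (t ^ (1 - τ))⁻¹ := by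
    rw [← Real.rpow_neg ht.le]; congr 1; ring
  have : 0 < t ^ (1 - τ) := by positivity
  have : 0 < a ^ (1 - τ) := by positivity
  rw [h3]
  field_simp

lemma win_low {τ c : ℝ} (hτ : 1 < τ) {μW : Measure ℝ} [IsProbabilityMeasure μW]
    (hW : WeightTail τ c μW) {a b : ℝ}
    (ha : 0 < a) (hab : a < b) :
    ∃ c1 > 0, ∀ᶠ t : ℝ in atTop, c1 * t ^ (1 - τ) ≤ μW.real (Set.Icc (a * t) (b * t)) := by
  have h := (tail_lim hW ha).sub (tail_lim hW (ha.trans hab))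
  have hpos : 0 < c * a ^ (1 - τ) - c * b ^ (1 - τ) := by
    have := Real.rpow_lt_rpow_of_neg ha hab (by linarith : 1 - τ < 0)
    have := hW.1
    nlinarith
  refine ⟨_, half_pos hpos, ?_⟩
  filter_upwards [h.eventually_const_lt (half_lt_self hpos), eventually_gt_atTop 0] with t h1 ht
  have h3 : t ^ (τ - 1) = (t ^ (1 - τ))⁻¹ := by
    rw [← Real.rpow_neg ht.le]; congr 1; ring
  have h4 : 0 < t ^ (1 - τ) := by positivity
  have h5 : μW.real (Set.Ioi (a * t)) ≤ μW.real (Set.Icc (a * t) (b * t)) + μW.real (Set.Ioi (b * t)) := by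
    refine (measureReal_mono ?_).trans (measureReal_union_le _ _)
    intro x hx
    rcases le_or_gt x (b * t) with h | h
    · exact Or.inl ⟨le_of_lt hx, h⟩
    · exact Or.inr h
  rw [h3, ← mul_sub (t ^ (1 - τ))⁻¹, inv_mul_eq_div, lt_div_iff₀ h4] at h1
  linarith

lemma win_up {τ c : ℝ} {μW : Measure ℝ} [IsProbabilityMeasure μW]
    (hW : WeightTail τ c μW) {a : ℝ} (ha : 0 < a) :
    ∃ C1 > 0, ∀ᶠ t : ℝ in atTop, μW.real (Set.Ici (a * t)) ≤ C1 * t ^ (1 - τ) := by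
  have h := tail_lim hW (half_pos ha)
  have hpos : 0 < c * (a/2) ^ (1 - τ) := by
    have := hW.1
    positivity
  refine ⟨_, add_pos hpos one_pos, ?_⟩
  filter_upwards [h.eventually_lt_const (lt_add_one _), eventually_gt_atTop 0] with t h1 ht
  have h3 : t ^ (τ - 1) = (t ^ (1 - τ))⁻¹ := by
    rw [← Real.rpow_neg ht.le]; congr 1; ring
  have h4 : 0 < t ^ (1 - τ) := by positivity
  rw [h3, inv_mul_eq_div, div_lt_iff₀ h4] at h1
  refine le_trans (measureReal_mono ?_) h1.le
  intro x hx
  have : a * t ≤ x := hx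
  have h6 : 0 < a * t := by positivity
  change a / 2 * t < x
  linarith

lemma integrable_weight {τ c : ℝ} (hτ : 2 < τ) {μW : Measure ℝ} [IsProbabilityMeasure μW]
    (hW : WeightTail τ c μW) : Integrable (fun x : ℝ => x) μW := by
  have hge : ∀ᵐ x ∂μW, (1:ℝ) ≤ x := by
    rw [ae_iff]
    simp only [not_le]
    exact hW.2.1
  obtain ⟨C1, hC1, hC⟩ := win_up hW one_pos
  obtain ⟨T, hT⟩ := eventually_atTop.1 hC
  set T' := max T 1
  have hT1 : (1:ℝ) ≤ T' := le_max_right _ _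
  refine ⟨by fun_prop, ?_⟩
  rw [hasFiniteIntegral_iff_ofReal (hge.mono fun x hx => by simp; linarith)]
  rw [lintegral_eq_lintegral_meas_lt μW (hge.mono fun x hx => by simp; linarith) (by fun_prop)]
  have hsub : Set.Ioi (0:ℝ) ⊆ Set.Ioc 0 T' ∪ Set.Ioi T' := by
    intro x hx
    rcases le_or_gt x T' with h | h
    · exact Or.inl ⟨hx, h⟩
    · exact Or.inr h
  refine (lintegral_mono_set hsub).trans_lt ((lintegral_union_le _ _ _).trans_lt ?_)
  refine ENNReal.add_lt_top.2 ⟨?_, ?_⟩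
  · refine (setLIntegral_mono (g := fun _ => 1) measurable_const (fun x _ => prob_le_one)).trans_lt ?_
    simp
  · have hi : IntegrableOn (fun t : ℝ => C1 * t ^ (1 - τ)) (Set.Ioi T') :=
      (integrableOn_Ioi_rpow_of_lt (by linarith) (by linarith)).const_mul C1
    refine lt_of_le_of_lt (setLIntegral_mono' (g := fun t => ENNReal.ofReal (C1 * t ^ (1 - τ))) measurableSet_Ioi ?_) ?_
    · intro t ht
      have ht' : T' < t := ht
      have h1 := hT t ((le_max_left T 1).trans ht'.le)
      rw [← ofReal_measureReal]
      apply ENNReal.ofReal_le_ofReal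
      refine le_trans (measureReal_mono ?_) h1
      intro x hx
      simpa using le_of_lt hx
    · exact hi.lintegral_lt_top

lemma wMean_pos {τ c : ℝ} (hτ : 2 < τ) {μW : Measure ℝ} [IsProbabilityMeasure μW]
    (hW : WeightTail τ c μW) : 0 < wMean μW := by
  have hge : ∀ᵐ x ∂μW, (1:ℝ) ≤ x := by
    rw [ae_iff]
    simp only [not_le]
    exact hW.2.1
  have : ∫ x, (1:ℝ) ∂μW ≤ ∫ x, x ∂μW :=
    integral_mono_ae (integrable_const _) (integrable_weight hτ hW) hge
  unfold wMean
  simp at this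
  linarith

open scoped Classical in
lemma pi_box {X : Type*} [MeasurableSpace X] (ν : Measure X) [IsProbabilityMeasure ν]
    {ι : Type*} [Fintype ι] (U : Finset ι) (W : Set X) :
    (Measure.pi fun _ : ι => ν).real {x | ∀ u ∈ U, x u ∈ W} = ν.real W ^ U.card := by
  have : {x : ι → X | ∀ u ∈ U, x u ∈ W} = Set.univ.pi (fun i => if i ∈ U then W else Set.univ) := by
    ext x
    simp only [Set.mem_ofPred_eq, Set.mem_pi, Set.mem_univ, true_implies]
    refine forall_congr' fun i => ?_
    split_ifs with h <;> simp [h]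
  rw [this, measureReal_def, Measure.pi_pi]
  simp only [apply_ite ν, measure_univ]
  rw [Finset.prod_ite]
  simp [measureReal_def]
  
lemma mp_w (μW : Measure ℝ) [IsProbabilityMeasure μW] (d n : ℕ) :
    MeasurePreserving (fun ω : GirgΩ d n => ω.1) (girgMeasure μW d n)
      (Measure.pi fun _ : Fin n => μW) := measurePreserving_fst

lemma mp_x (μW : Measure ℝ) [IsProbabilityMeasure μW] (d n : ℕ) :
    MeasurePreserving (fun ω : GirgΩ d n => ω.2.1) (girgMeasure μW d n)
      (Measure.pi fun _ : Fin n => (volume : Measure (Torus d))) :=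
  measurePreserving_fst.comp measurePreserving_snd

lemma mp_c (μW : Measure ℝ) [IsProbabilityMeasure μW] (d n : ℕ) :
    MeasurePreserving (fun ω : GirgΩ d n => ω.2.2) (girgMeasure μW d n)
      (Measure.pi fun _ : Sym2 (Fin n) => volume.restrict (Set.Icc (0:ℝ) 1)) :=
  measurePreserving_snd.comp measurePreserving_snd

lemma coin_null (μW : Measure ℝ) [IsProbabilityMeasure μW] (d n : ℕ) :
    girgMeasure μW d n {ω | ∃ e, 1 < ω.2.2 e} = 0 := by
  rw [Set.ofPred_exists, measure_iUnion_null_iff]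
  intro e
  have h := ((measurePreserving_eval (fun _ : Sym2 (Fin n) => volume.restrict (Set.Icc (0:ℝ) 1)) e).comp
    (mp_c μW d n)).quasiMeasurePreserving.preimage_null (s := Set.Ioi 1) (by
      rw [Measure.restrict_apply measurableSet_Ioi]
      have : Set.Ioi (1:ℝ) ∩ Set.Icc 0 1 = ∅ := by
        ext x; simp; intro h1 _; exact h1
      simp [this])
  exact h

lemma gcp_le {γ μbar : ℝ} {d n : ℕ} (hγ : 0 < γ) {a b r y : ℝ} (h0 : 0 ≤ a * b / ((n : ℝ) * μbar * r ^ d))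
    (h : a * b / ((n : ℝ) * μbar * r ^ d) ≤ y) : gcp γ μbar d n a b r ≤ y ^ γ :=
  (min_le_right _ _).trans (Real.rpow_le_rpow h0 h hγ.le)

lemma le_gcp {γ μbar : ℝ} {d n : ℕ} (hγ : 0 < γ) {a b r y : ℝ} (h0 : 0 ≤ y)
    (h : y ≤ a * b / ((n : ℝ) * μbar * r ^ d)) : min 1 (y ^ γ) ≤ gcp γ μbar d n a b r :=
  min_le_min le_rfl (Real.rpow_le_rpow h0 h hγ.le)

lemma dist_win {d k : ℕ} {ε t : ℝ} {x : Fin k → Torus d}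
    (h : ∀ i j : Fin k, i < j → dist (x i) (x j) ∈ windowIcc ε t) (i j : Fin k) (hij : i ≠ j) :
    dist (x i) (x j) ∈ windowIcc ε t := by
  rcases lt_or_gt_of_ne hij with h' | h'
  · exact h i j h'
  · rw [dist_comm]; exact h j i h'

def gS (s : StarKind) {k : ℕ} (H : SimpleGraph (Fin k)) (μbar ε : ℝ) (d : ℕ) (δ : ℝ) :
    Set (Fin k → Torus d) :=
  {x | (∀ i j : Fin k, i < j → dist (x i) (x j) ∈ windowIcc ε 1) ∧
    ∀ i j, nonE s H i j → ε ^ 2 * (1 + δ) ^ 3 ≤ μbar * dist (x i) (x j) ^ d}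

def gS0 (s : StarKind) {k : ℕ} (H : SimpleGraph (Fin k)) (μbar ε : ℝ) (d : ℕ) :
    Set (Fin k → Torus d) :=
  {x | (∀ i j : Fin k, i < j → dist (x i) (x j) ∈ windowIcc ε 1) ∧
    ∀ i j, nonE s H i j → ε ^ 2 < μbar * dist (x i) (x j) ^ d}

lemma gS0_sub (s : StarKind) {k : ℕ} (H : SimpleGraph (Fin k)) (μbar ε : ℝ) (d : ℕ) (δ : ℝ) :
    gS0 s H μbar ε d ⊆ ⋃ j : ℕ, gS s H μbar ε d (δ / (j + 1)) := by
  intro x hx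
  have hl : Tendsto (fun j : ℕ => ε ^ 2 * (1 + δ / ((j:ℝ) + 1)) ^ 3) atTop (nhds (ε ^ 2)) := by
    have h1 : Tendsto (fun j : ℕ => δ / ((j:ℝ) + 1)) atTop (nhds 0) :=
      tendsto_const_nhds.div_atTop (tendsto_atTop_add_const_right _ _ tendsto_natCast_atTop_atTop)
    have h2 := ((h1.const_add 1).pow 3).const_mul (ε ^ 2)
    simpa using h2
  have : ∀ᶠ j : ℕ in atTop, ∀ i i' : Fin k, nonE s H i i' →
      ε ^ 2 * (1 + δ / ((j:ℝ) + 1)) ^ 3 ≤ μbar * dist (x i) (x i') ^ d := by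
    rw [eventually_all]; intro i
    rw [eventually_all]; intro i'
    by_cases h : nonE s H i i'
    · filter_upwards [hl.eventually_lt_const (hx.2 i i' h)] with j hj _
      exact hj.le
    · exact Eventually.of_forall fun j h' => absurd h' h
  obtain ⟨j, hj⟩ := this.exists
  exact Set.mem_iUnion.2 ⟨j, hx.1, hj⟩

lemma caseA_sq {n : ℕ} : ((n:ℝ) ^ (1/2 : ℝ)) * ((n:ℝ) ^ (1/2 : ℝ)) = n := by
  rw [← Real.sqrt_eq_rpow]
  exact Real.mul_self_sqrt (Nat.cast_nonneg n)

lemma caseA_null {k d : ℕ} (γ μbar : ℝ) (hγ : 0 < γ) (hμ : 0 < μbar)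
    (μW : Measure ℝ) [IsProbabilityMeasure μW] 
    (H : SimpleGraph (Fin k)) (s : StarKind) (ε : ℝ) (hε : 0 < ε)
    (α : Fin k → ℝ) (β : Fin k → Fin k → ℝ) (hα : ∀ i, α i = 1/2) 
    (hβ : ∀ i j : Fin k, i < j → β i j = 0)
    (h0 : (volume : Measure (Fin k → Torus d)) (gS0 s H μbar ε d) = 0) (n : ℕ) (hn : 0 < n) :
    girgMeasure μW d k (gE s H γ μbar ε α β d n) = 0 := by
  have hsub : gE s H γ μbar ε α β d n ⊆
      (fun ω : GirgΩ d k => ω.2.1) ⁻¹' (gS0 s H μbar ε d) ∪ {ω | ∃ e, 1 < ω.2.2 e} := by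
    rintro ω ⟨h1, h2, h3, h4⟩
    by_contra hcon
    simp only [Set.mem_union, Set.mem_preimage, Set.mem_ofPred_eq, not_or, not_exists, not_lt] at hcon
    obtain ⟨hc1, hc2⟩ := hcon
    apply hc1
    have h2' : ∀ i j : Fin k, i < j → dist (ω.2.1 i) (ω.2.1 j) ∈ windowIcc ε 1 := by
      intro i j hij
      have := h2 i j hij
      rwa [hβ i j hij, Real.rpow_zero] at this
    refine ⟨h2', fun i j hij => ?_⟩
    by_contra hlt
    rw [not_lt] at hlt
    have hd := dist_win h2' i j hij.2.1
    have hdp : 0 < dist (ω.2.1 i) (ω.2.1 j) := by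
      have := hd.1
      linarith
    have hwi := (h1 i).1
    have hwj := (h1 j).1
    rw [hα] at hwi hwj
    set t := (n:ℝ) ^ (1/2 : ℝ) with ht
    have htt : t * t = n := caseA_sq
    have hn' : (0:ℝ) < n := by exact_mod_cast hn
    have htp : 0 < t := by positivity
    have hww : ε ^ 2 * n ≤ ω.1 i * ω.1 j := by
      calc ε ^ 2 * n = (ε * t) * (ε * t) := by rw [← htt]; ring
        _ ≤ _ := mul_le_mul hwi hwj (by positivity) ((by positivity : 0 ≤ ε * t).trans hwi)
    have h5 : min 1 ((1:ℝ) ^ γ) ≤ gcp γ μbar d n (ω.1 i) (ω.1 j) (dist (ω.2.1 i) (ω.2.1 j)) := by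
      apply le_gcp hγ zero_le_one
      rw [le_div_iff₀ (by positivity)]
      nlinarith
    have h6 := h4 i j hij
    have h7 := hc2 s(i,j)
    simp at h5
    linarith
  refine measure_mono_null hsub (measure_union_null ?_ (coin_null μW d k))
  exact (mp_x μW d k).quasiMeasurePreserving.preimage_null h0

lemma caseA_low {k d : ℕ} (γ μbar : ℝ) (hγ : 0 < γ) (hμ : 0 < μbar)
    (μW : Measure ℝ) [IsProbabilityMeasure μW] 
    (H : SimpleGraph (Fin k)) (s : StarKind) (ε : ℝ) (hε : 0 < ε)
    (α : Fin k → ℝ) (β : Fin k → Fin k → ℝ) (hα : ∀ i, α i = 1/2) 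
    (hβ : ∀ i j : Fin k, i < j → β i j = 0) (δ : ℝ) (hδ : 0 < δ) (hδ2 : ε * (1 + δ) ≤ 1 / ε)
    (h0 : (volume : Measure (Fin k → Torus d)) (gS s H μbar ε d δ) ≠ 0)  :
    ∃ κ > 0, ∀ n : ℕ, 0 < n → 
      κ * (μW.real (Set.Icc (ε * (n:ℝ) ^ (1/2 : ℝ)) (ε * (1 + δ) * (n:ℝ) ^ (1/2 : ℝ)))) ^ k ≤
      (girgMeasure μW d k).real (gE s H γ μbar ε α β d n) := by
  classical
  set a : ℝ := min 1 ((ε ^ 2 / (μbar * (1 / ε) ^ d)) ^ γ) with ha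
  set b : ℝ := (1 / (1 + δ)) ^ γ with hb
  have ha0 : 0 < a := lt_min one_pos (by positivity)
  have ha1 : a ≤ 1 := min_le_left _ _
  have hb0 : 0 ≤ b := by positivity
  have hb1 : b < 1 := Real.rpow_lt_one (by positivity) (by rw [div_lt_one (by positivity)]; linarith) hγ
  set Cs : Set (Sym2 (Fin k) → ℝ) := Set.univ.pi (fun e => if e ∈ H.edgeSet then Set.Icc 0 a else Set.Ioc b 1) with hCs
  set cm := (Measure.pi fun _ : Sym2 (Fin k) => volume.restrict (Set.Icc (0:ℝ) 1)) with hcm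
  have hCpos : cm Cs ≠ 0 := by
    rw [hcm, hCs, Measure.pi_pi, Finset.prod_ne_zero_iff]
    intro e _
    split_ifs
    · rw [Measure.restrict_apply measurableSet_Icc, Set.inter_eq_left.2 (Set.Icc_subset_Icc le_rfl ha1)]
      simpa using ha0
    · rw [Measure.restrict_apply measurableSet_Ioc, Set.inter_eq_left.2]
      · simpa using hb1
      · intro x hx; exact ⟨hb0.trans hx.1.le, hx.2⟩
  refine ⟨(volume : Measure (Fin k → Torus d)).real (gS s H μbar ε d δ) * cm.real Cs, ?_, ?_⟩
  · exact mul_pos (ENNReal.toReal_pos h0 (measure_ne_top _ _)) (ENNReal.toReal_pos hCpos (measure_ne_top _ _))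
  intro n hn
  set t := (n:ℝ) ^ (1/2 : ℝ) with ht
  have htt : t * t = n := caseA_sq
  have hn' : (0:ℝ) < n := by exact_mod_cast hn
  have htp : 0 < t := by positivity
  set I := Set.Icc (ε * t) (ε * (1 + δ) * t) with hI
  have hbox : (Set.univ.pi (fun _ : Fin k => I)) ×ˢ ((gS s H μbar ε d δ) ×ˢ Cs) ⊆
      gE s H γ μbar ε α β d n := by
    rintro ω ⟨hw, hx, hc⟩
    simp only [Set.mem_pi, Set.mem_univ, true_implies] at hw
    have hc' : ∀ e, ω.2.2 e ∈ if e ∈ H.edgeSet then Set.Icc 0 a else Set.Ioc b 1 :=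
      fun e => hc e (Set.mem_univ _)
    refine ⟨?_, ?_, ?_, ?_⟩
    · intro i
      rw [hα]
      refine ⟨(hw i).1, (hw i).2.trans ?_⟩
      rw [← ht, div_eq_inv_mul, ← one_div]
      gcongr
    · intro i j hij
      rw [hβ i j hij, Real.rpow_zero]
      exact hx.1 i j hij
    · intro i j hij
      have h1 := hc' s(i,j)
      rw [if_pos (by simpa using hij)] at h1
      refine h1.2.trans (le_gcp hγ (by positivity) ?_)
      have hd := dist_win hx.1 i j hij.ne
      have hdp : 0 < dist (ω.2.1 i) (ω.2.1 j) := by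
        have := hd.1
        linarith
      have hww : ε ^ 2 * n ≤ ω.1 i * ω.1 j := by
        calc ε ^ 2 * n = (ε * t) * (ε * t) := by rw [← htt]; ring
          _ ≤ _ := mul_le_mul (hw i).1 (hw j).1 (by positivity) ((by positivity : 0 ≤ ε * t).trans (hw i).1)
      have hdu : dist (ω.2.1 i) (ω.2.1 j) ≤ 1 / ε := hd.2
      calc ε ^ 2 / (μbar * (1 / ε) ^ d) = ε ^ 2 * n / (n * μbar * (1 / ε) ^ d) := by field_simp
        _ ≤ ω.1 i * ω.1 j / (n * μbar * (1 / ε) ^ d) := by gcongr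
        _ ≤ _ := by
          have : 0 ≤ ω.1 i * ω.1 j := (by positivity : 0 ≤ ε ^ 2 * (n:ℝ)).trans hww
          gcongr
    · intro i j hij
      have h1 := hc' s(i,j)
      rw [if_neg (by simpa using hij.2.2)] at h1
      refine lt_of_le_of_lt ?_ h1.1
      have hd := dist_win hx.1 i j hij.2.1
      have hdp : 0 < dist (ω.2.1 i) (ω.2.1 j) := by
        have := hd.1
        linarith
      have hwi0 : 0 ≤ ω.1 i := (by positivity : 0 ≤ ε * t).trans (hw i).1
      have hwj0 : 0 ≤ ω.1 j := (by positivity : 0 ≤ ε * t).trans (hw j).1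
      have hww : ω.1 i * ω.1 j ≤ ε ^ 2 * (1 + δ) ^ 2 * n := by
        calc ω.1 i * ω.1 j ≤ (ε * (1 + δ) * t) * (ε * (1 + δ) * t) := 
              mul_le_mul (hw i).2 (hw j).2 hwj0 (by positivity)
          _ = _ := by rw [← htt]; ring
      apply gcp_le hγ (by positivity)
      rw [div_le_div_iff₀ (by positivity) (by positivity)]
      have h2 := hx.2 i j hij
      calc ω.1 i * ω.1 j * (1 + δ) ≤ ε ^ 2 * (1 + δ) ^ 2 * n * (1 + δ) := by gcongr
        _ = n * (ε ^ 2 * (1 + δ) ^ 3) := by ring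
        _ ≤ n * (μbar * dist (ω.2.1 i) (ω.2.1 j) ^ d) := by gcongr
        _ = _ := by ring
  refine le_trans (le_of_eq ?_) (measureReal_mono hbox)
  unfold girgMeasure
  rw [measureReal_prod_prod, measureReal_prod_prod]
  simp only [measureReal_def, Measure.pi_pi, Finset.prod_const, ENNReal.toReal_pow, Finset.card_univ, Fintype.card_fin]
  rw [mul_comm]
  rfl

lemma caseA {k d : ℕ} (τ γ c μbar : ℝ) (hτ : τ ∈ Set.Ioo (2:ℝ) 3) (hγ : 0 < γ) (hμ : 0 < μbar)
    (μW : Measure ℝ) [IsProbabilityMeasure μW] (hW : WeightTail τ c μW)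
    (H : SimpleGraph (Fin k)) (s : StarKind)
    (ε : ℝ) (hε : ε ∈ Set.Ioo (0:ℝ) 1)
    (α : Fin k → ℝ) (β : Fin k → Fin k → ℝ) (hα : ∀ i, α i = 1/2) 
    (hβ : ∀ i j : Fin k, i < j → β i j = 0) :
    Tendsto (fun n : ℕ =>
        ProbabilityTheory.variance
            (fun ω => (starNM s H γ μbar ε α β d n ω : ℝ)) (girgMeasure μW d n) /
          (∫ ω, (starNM s H γ μbar ε α β d n ω : ℝ) ∂(girgMeasure μW d n)) ^ 2)
      atTop (nhds 0) := by
  classical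
  obtain ⟨hε0, hε1⟩ := hε
  obtain ⟨C1, hC1, hup⟩ := win_up hW hε0
  have htend : Tendsto (fun n : ℕ => (n:ℝ) ^ (1/2 : ℝ)) atTop atTop :=
    (tendsto_rpow_atTop (by norm_num)).comp tendsto_natCast_atTop_atTop
  refine main_reduction γ μbar μW H s ε α β
    (fun n m => (C1 * ((n:ℝ) ^ (1/2 : ℝ)) ^ (1 - τ)) ^ m) (fun n m => by positivity) ?_ ?_
  · filter_upwards [htend.eventually hup] with n hn v v' hv hv' _
    have hsub : gproj d v ⁻¹' gE s H γ μbar ε α β d n ∩ gproj d v' ⁻¹' gE s H γ μbar ε α β d n ⊆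
        (fun ω : GirgΩ d n => ω.1) ⁻¹' {w | ∀ u ∈ Finset.univ.image v ∪ Finset.univ.image v',
          w u ∈ Set.Ici (ε * (n:ℝ) ^ (1/2 : ℝ))} := by
      rintro ω ⟨h1, h2⟩ u hu
      simp only [Finset.mem_union, Finset.mem_image, Finset.mem_univ, true_and] at hu
      rcases hu with ⟨i, rfl⟩ | ⟨i, rfl⟩
      · have := (h1.1 i).1
        rwa [hα] at this
      · have := (h2.1 i).1
        rwa [hα] at this
    refine (measureReal_mono hsub).trans ?_
    rw [measureReal_def, (mp_w μW d n).measure_preimage, ← measureReal_def, pi_box]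
    · gcongr
    · refine MeasurableSet.nullMeasurableSet ?_
      simp only [Set.ofPred_forall]
      exact MeasurableSet.iInter fun u => MeasurableSet.iInter fun _ =>
        (measurable_pi_apply u) measurableSet_Ici
  · have hδ0 : 0 < 1 / ε ^ 2 - 1 := by
      rw [sub_pos, lt_div_iff₀ (by positivity)]
      nlinarith
    set δ0 := 1 / ε ^ 2 - 1 with hδ0d
    by_cases hnull : ∀ j : ℕ, (volume : Measure (Fin k → Torus d)) (gS s H μbar ε d (δ0 / (j + 1))) = 0
    · left
      filter_upwards [eventually_gt_atTop 0] with n hn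
      rw [measureReal_def, caseA_null γ μbar hγ hμ μW H s ε hε0 α β hα hβ
        (measure_mono_null (gS0_sub s H μbar ε d δ0) (measure_iUnion_null hnull)) n hn]
      simp
    · right
      push Not at hnull
      obtain ⟨j, hj⟩ := hnull
      set δ := δ0 / ((j:ℝ) + 1) with hδd
      have hδ : 0 < δ := by positivity
      have hδle : δ ≤ δ0 := div_le_self hδ0.le (by simp)
      have hδ2 : ε * (1 + δ) ≤ 1 / ε := by
        calc ε * (1 + δ) ≤ ε * (1 + δ0) := by gcongr
          _ = 1 / ε := by rw [hδ0d]; field_simp; ring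
      obtain ⟨κ, hκ, hlow⟩ := caseA_low γ μbar hγ hμ μW H s ε hε0 α β hα hβ δ hδ hδ2 hj
      obtain ⟨c1, hc1, hwl⟩ := win_low (by linarith [hτ.1]) hW hε0 (b := ε * (1 + δ)) (by nlinarith)
      refine ⟨fun n => κ * (c1 * ((n:ℝ) ^ (1/2 : ℝ)) ^ (1 - τ)) ^ k, ?_, ?_⟩
      · filter_upwards [htend.eventually hwl, eventually_gt_atTop 0] with n hn hn0
        have hn' : (0:ℝ) < n := by exact_mod_cast hn0
        refine ⟨by positivity, le_trans ?_ (hlow n hn0)⟩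
        gcongr
      · intro m hm
        obtain ⟨hm1, hm2⟩ := Finset.mem_Ico.1 hm
        have hnu : Tendsto (fun n : ℕ => (n:ℝ) * ((n:ℝ) ^ (1/2 : ℝ)) ^ (1 - τ)) atTop atTop := by
          have h1 : Tendsto (fun n : ℕ => (n:ℝ) ^ ((3 - τ)/2)) atTop atTop :=
            (tendsto_rpow_atTop (by linarith [hτ.2])).comp tendsto_natCast_atTop_atTop
          refine h1.congr' ?_
          filter_upwards [eventually_gt_atTop 0] with n hn0
          have hn' : (0:ℝ) < n := by exact_mod_cast hn0
          rw [← Real.rpow_mul hn'.le]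
          nth_rewrite 2 [← Real.rpow_one (n:ℝ)]
          rw [← Real.rpow_add hn']
          congr 1; ring
        have h2 : Tendsto (fun n : ℕ => (C1 ^ m / (κ ^ 2 * c1 ^ (2 * k))) *
            (((n:ℝ) * ((n:ℝ) ^ (1/2 : ℝ)) ^ (1 - τ)) ^ (2 * k - m))⁻¹) atTop (nhds 0) := by
          have := ((tendsto_pow_atTop (by omega : 2 * k - m ≠ 0)).comp hnu).inv_tendsto_atTop.const_mul
            (C1 ^ m / (κ ^ 2 * c1 ^ (2 * k)))
          rw [mul_zero] at this
          exact this
        refine h2.congr' ?_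
        filter_upwards [eventually_gt_atTop 0] with n hn0
        have hn' : (0:ℝ) < n := by exact_mod_cast hn0
        have hu : 0 < ((n:ℝ) ^ (1/2 : ℝ)) ^ (1 - τ) := by positivity
        generalize ((n:ℝ) ^ (1/2 : ℝ)) ^ (1 - τ) = u at hu
        have h3 : ((n:ℝ) ^ k * (κ * (c1 * u) ^ k)) ^ 2 =
            κ ^ 2 * c1 ^ (2 * k) * ((n * u) ^ (2 * k - m) * (n * u) ^ m) := by
          rw [← pow_add, Nat.sub_add_cancel hm2.le]
          ring
        rw [h3]
        have h4 : (n:ℝ) ^ m * (C1 * u) ^ m = C1 ^ m * (n * u) ^ m := by ring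
        rw [h4]
        field_simp

def shiftX {d n : ℕ} (t : Torus d) (ω : GirgΩ d n) : GirgΩ d n :=
  (ω.1, (fun i => ω.2.1 i + t), ω.2.2)

lemma shiftX_mp (μW : Measure ℝ) [IsProbabilityMeasure μW] (d n : ℕ) (t : Torus d) :
    MeasurePreserving (shiftX t) (girgMeasure μW d n) (girgMeasure μW d n) := by
  have h1 : MeasurePreserving (fun (x : Fin n → Torus d) i => x i + t)
      (Measure.pi fun _ => volume) (Measure.pi fun _ => volume) :=
    measurePreserving_pi _ _ (fun _ => measurePreserving_add_right volume t)
  exact (MeasurePreserving.id _).prod (h1.prod (MeasurePreserving.id _))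

lemma girg_avg (μW : Measure ℝ) [IsProbabilityMeasure μW] (d n : ℕ) (i0 : Fin n)
    (S : Set (GirgΩ d n)) (hS : MeasurableSet S) (hinv : ∀ t ω, shiftX t ω ∈ S ↔ ω ∈ S)
    (B : Set (Torus d)) (hB : MeasurableSet B) :
    girgMeasure μW d n (S ∩ {ω | ω.2.1 i0 ∈ B}) = girgMeasure μW d n S * volume B := by
  have hX : Measurable (fun ω : GirgΩ d n => ω.2.1 i0) := by fun_prop
  set Q : Set (Torus d × GirgΩ d n) := {q | q.2 ∈ S ∧ q.2.2.1 i0 + q.1 ∈ B} with hQ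
  have hQm : MeasurableSet Q := by
    refine MeasurableSet.inter (measurable_snd hS) ?_
    have : Measurable (fun q : Torus d × GirgΩ d n => q.2.2.1 i0 + q.1) :=
      (hX.comp measurable_snd).add measurable_fst
    exact this hB
  have h1 : (volume : Measure (Torus d)).prod (girgMeasure μW d n) Q =
      girgMeasure μW d n (S ∩ {ω | ω.2.1 i0 ∈ B}) := by
    rw [Measure.prod_apply hQm]
    have : ∀ t : Torus d, girgMeasure μW d n (Prod.mk t ⁻¹' Q) =
        girgMeasure μW d n (S ∩ {ω | ω.2.1 i0 ∈ B}) := by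
      intro t
      have hm : MeasurableSet (S ∩ {ω : GirgΩ d n | ω.2.1 i0 ∈ B}) := hS.inter (hX hB)
      rw [← (shiftX_mp μW d n t).measure_preimage hm.nullMeasurableSet]
      congr 1
      ext ω
      simp only [hQ, Set.mem_preimage, Set.mem_ofPred_eq, Set.mem_inter_iff, hinv t ω]
      rfl
    simp [this]
  have h2 : (volume : Measure (Torus d)).prod (girgMeasure μW d n) Q =
      girgMeasure μW d n S * volume B := by
    rw [Measure.prod_apply_symm hQm]
    have : ∀ ω : GirgΩ d n, (volume : Measure (Torus d)) ((fun t => (t, ω)) ⁻¹' Q) =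
        S.indicator (fun _ => volume B) ω := by
      intro ω
      by_cases h : ω ∈ S
      · rw [Set.indicator_of_mem h, ← measure_preimage_add volume (ω.2.1 i0) B]
        congr 1
        ext t
        simp [hQ, h]
      · rw [Set.indicator_of_notMem h]
        have : ((fun t => (t, ω)) ⁻¹' Q) = ∅ := by
          ext t; simp [hQ, h]
        simp [this]
    simp only [this]
    rw [lintegral_indicator_const hS, mul_comm]
  rw [← h1, h2]

lemma vol_ball (d : ℕ) (x : Torus d) (r : ℝ) (hr : 0 ≤ r) (hr2 : r ≤ 1/2) :
    (volume : Measure (Torus d)).real (Metric.closedBall x r) = (2 * r) ^ d := by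
  rw [measureReal_def, closedBall_pi _ hr, volume_pi_pi]
  simp only [AddCircle.volume_closedBall]
  rw [min_eq_right (by linarith)]
  simp [ENNReal.toReal_ofReal, hr]

open scoped Classical in
lemma caseB_up (μW : Measure ℝ) [IsProbabilityMeasure μW] (d n : ℕ) (u0 : Fin n)
    (U : Finset (Fin n)) (r : ℝ) (hr : 0 < r) (hr2 : r ≤ 1/4) :
    (girgMeasure μW d n).real {ω | ∀ u ∈ U, dist (ω.2.1 u) (ω.2.1 u0) ≤ r} ≤
      ((4 * r) ^ d) ^ U.card / (2 * r) ^ d := by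
  set S : Set (GirgΩ d n) := {ω | ∀ u ∈ U, dist (ω.2.1 u) (ω.2.1 u0) ≤ r} with hS
  have hSm : MeasurableSet S := by
    simp only [hS, Set.ofPred_forall]
    refine MeasurableSet.iInter fun u => MeasurableSet.iInter fun _ => ?_
    have h1 : Measurable (fun ω : GirgΩ d n => ω.2.1 u) := by fun_prop
    have h2 : Measurable (fun ω : GirgΩ d n => ω.2.1 u0) := by fun_prop
    exact measurableSet_le (h1.dist h2) measurable_const
  have h := girg_avg μW d n u0 S hSm (by
    intro t ω
    simp only [hS, shiftX, Set.mem_ofPred_eq, dist_add_right]) (Metric.closedBall 0 r) Metric.isClosed_closedBall.measurableSet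
  have hr' := congrArg ENNReal.toReal h
  rw [ENNReal.toReal_mul, ← measureReal_def, ← measureReal_def, ← measureReal_def, vol_ball d 0 r hr.le (by linarith)] at hr'
  rw [le_div_iff₀ (by positivity), ← hr']
  have hsub : S ∩ {ω | ω.2.1 u0 ∈ Metric.closedBall (0 : Torus d) r} ⊆
      (fun ω : GirgΩ d n => ω.2.1) ⁻¹' {x | ∀ u ∈ U, x u ∈ Metric.closedBall (0 : Torus d) (2 * r)} := by
    rintro ω ⟨h1, h2⟩ u hu
    have h3 := h1 u hu
    rw [Set.mem_ofPred_eq, Metric.mem_closedBall] at h2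
    rw [Metric.mem_closedBall]
    linarith [dist_triangle (ω.2.1 u) (ω.2.1 u0) 0]
  refine (measureReal_mono hsub).trans ?_
  rw [measureReal_def, (mp_x μW d n).measure_preimage, ← measureReal_def, pi_box,
    vol_ball d 0 (2 * r) (by linarith) (by linarith)]
  · apply le_of_eq; ring
  · refine MeasurableSet.nullMeasurableSet ?_
    simp only [Set.ofPred_forall]
    exact MeasurableSet.iInter fun u => MeasurableSet.iInter fun _ =>
      (measurable_pi_apply u) Metric.isClosed_closedBall.measurableSet

def mkY {k d : ℕ} (y : Fin k → Fin d → ℝ) : Fin k → Torus d := fun i j => (y i j : AddCircle (1:ℝ))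

def boxJ (k d : ℕ) : Set (Fin k → Fin d → ℝ) :=
  Set.univ.pi fun _ => Set.univ.pi fun _ => Set.Ioc (-(1/2) : ℝ) (-(1/2) + 1)

lemma mkY_mp (k d : ℕ) : MeasurePreserving (mkY (k := k) (d := d))
    (volume.restrict (boxJ k d)) (Measure.pi fun _ : Fin k => (volume : Measure (Torus d))) := by
  have h1 : MeasurePreserving (fun (z : Fin d → ℝ) (j : Fin d) => (z j : AddCircle (1:ℝ)))
      (Measure.pi fun _ => volume.restrict (Set.Ioc (-(1/2) : ℝ) (-(1/2) + 1))) volume :=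
    measurePreserving_pi _ _ (fun _ => AddCircle.measurePreserving_mk 1 (-(1/2)))
  have h2 := measurePreserving_pi (fun _ : Fin k => _) (fun _ : Fin k => _) (fun _ => h1)
  have h3 : (volume : Measure (Fin k → Fin d → ℝ)).restrict (boxJ k d) =
      Measure.pi fun _ => Measure.pi fun _ => volume.restrict (Set.Ioc (-(1/2) : ℝ) (-(1/2) + 1)) := by
    unfold boxJ
    rw [volume_pi, Measure.restrict_pi_pi]
    congr 1
    ext i : 1
    rw [volume_pi, Measure.restrict_pi_pi]
  rw [h3]
  exact h2

abbrev Ω' (k d : ℕ) := (Fin k → ℝ) × (Fin k → Fin d → ℝ) × (Sym2 (Fin k) → ℝ)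

def Qm (μW : Measure ℝ) (k d : ℕ) : Measure (Ω' k d) :=
  (Measure.pi fun _ : Fin k => μW).prod
    ((volume : Measure (Fin k → Fin d → ℝ)).prod
      (Measure.pi fun _ : Sym2 (Fin k) => volume.restrict (Set.Icc (0:ℝ) 1)))

def Phi {k d : ℕ} (ρ : ℝ) (ω : Ω' k d) : GirgΩ d k := (ω.1, mkY (ρ • ω.2.1), ω.2.2)

lemma scale_mp (k d : ℕ) (ρ : ℝ) (hρ : 0 < ρ) :
    MeasurePreserving (fun y : Fin k → Fin d → ℝ => ρ • y) volume
      (ENNReal.ofReal ((ρ ^ d) ^ k)⁻¹ • volume) := by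
  have hK : ENNReal.ofReal |(ρ ^ Module.finrank ℝ (Fin k → Fin d → ℝ))⁻¹| =
      ENNReal.ofReal ((ρ ^ d) ^ k)⁻¹ := by
    rw [abs_of_pos (by positivity), ← pow_mul]
    simp [Module.finrank_pi_fintype, mul_comm]
  refine ⟨by fun_prop, ?_⟩
  rw [← hK]
  exact Measure.map_addHaar_smul volume hρ.ne'

lemma boxJ_meas (k d : ℕ) : MeasurableSet (boxJ k d) :=
    MeasurableSet.univ_pi fun _ => MeasurableSet.univ_pi fun _ => measurableSet_Ioc

lemma scale_mk_mp (k d : ℕ) (ρ : ℝ) (hρ : 0 < ρ) :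
    MeasurePreserving (fun y : Fin k → Fin d → ℝ => mkY (ρ • y))
      (volume.restrict ((fun y : Fin k → Fin d → ℝ => ρ • y) ⁻¹' boxJ k d))
      (ENNReal.ofReal ((ρ ^ d) ^ k)⁻¹ • (Measure.pi fun _ : Fin k => (volume : Measure (Torus d)))) := by
  have s2 := (scale_mp k d ρ hρ).restrict_preimage (boxJ_meas k d)
  rw [Measure.restrict_smul] at s2
  exact ((mkY_mp k d).smul_measure (ENNReal.ofReal ((ρ ^ d) ^ k)⁻¹)).comp s2

lemma abs_prod {A B B' C : Type*} [MeasurableSpace A] [MeasurableSpace B] [MeasurableSpace B']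
    [MeasurableSpace C] (m1 : Measure A) (m2 : Measure B) (m2' : Measure B') (m3 : Measure C)
    [SFinite m1] [SFinite m2] [SFinite m2'] [SFinite m3] (f : B → B') (J : Set B)
    (hJ : MeasurableSet J) (K : ENNReal) [SFinite (K • m2')] (hf : MeasurePreserving f (m2.restrict J) (K • m2'))
    (E : Set (A × B' × C)) (hE : MeasurableSet E) :
    m1.prod (m2.prod m3) ((fun q : A × B × C => (q.1, f q.2.1, q.2.2)) ⁻¹' E ∩ {q | q.2.1 ∈ J}) =
      K * m1.prod (m2'.prod m3) E := by
  have s4 : MeasurePreserving (fun q : A × B × C => (q.1, f q.2.1, q.2.2))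
      (m1.prod ((m2.restrict J).prod m3)) (m1.prod ((K • m2').prod m3)) :=
    (MeasurePreserving.id m1).prod (hf.prod (MeasurePreserving.id m3))
  have s5 := s4.measure_preimage (s := E) hE.nullMeasurableSet
  rw [Measure.prod_smul_left, Measure.prod_smul_right, Measure.smul_apply, smul_eq_mul] at s5
  rw [← s5]
  have hr : m1.prod ((m2.restrict J).prod m3) =
      (m1.prod (m2.prod m3)).restrict (Set.univ ×ˢ (J ×ˢ Set.univ)) := by
    rw [← Measure.prod_restrict, ← Measure.prod_restrict, Measure.restrict_univ, Measure.restrict_univ]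
  rw [hr, Measure.restrict_apply']
  · congr 1
    ext ω
    simp only [Set.mem_inter_iff, Set.mem_preimage, Set.mem_ofPred_eq, Set.mem_prod, Set.mem_univ, true_and, and_true]
  · exact MeasurableSet.univ.prod (hJ.prod MeasurableSet.univ)

lemma Phi_meas (μW : Measure ℝ) [IsProbabilityMeasure μW] (k d : ℕ) (ρ : ℝ) (hρ : 0 < ρ)
    (E : Set (GirgΩ d k)) (hE : MeasurableSet E) :
    Qm μW k d (Phi ρ ⁻¹' E ∩ {ω | ρ • ω.2.1 ∈ boxJ k d}) =
      ENNReal.ofReal ((ρ ^ d) ^ k)⁻¹ * girgMeasure μW d k E := by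
  have hsc := scale_mk_mp k d ρ hρ
  have hJ := (scale_mp k d ρ hρ).measurable (boxJ_meas k d)
  generalize hK : ENNReal.ofReal ((ρ ^ d) ^ k)⁻¹ = K at hsc ⊢
  haveI : SFinite (K • (Measure.pi fun _ : Fin k => (volume : Measure (Torus d)))) := inferInstance
  exact abs_prod (Measure.pi fun _ : Fin k => μW) volume
    (Measure.pi fun _ : Fin k => (volume : Measure (Torus d)))
    (Measure.pi fun _ : Sym2 (Fin k) => volume.restrict (Set.Icc (0:ℝ) 1)) _ _ hJ K hsc E hE

lemma norm_mk (d : ℕ) (z : Fin d → ℝ) (hz : ∀ j, |z j| ≤ 1/2) :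
    ‖(fun j => (z j : AddCircle (1:ℝ)) : Torus d)‖ = ‖z‖ := by
  have : ∀ j, ‖(z j : AddCircle (1:ℝ))‖ = ‖z j‖ := by
    intro j
    rw [Real.norm_eq_abs]
    refine (AddCircle.norm_coe_eq_abs_iff (1:ℝ) one_ne_zero).2 ?_
    simpa using hz j
  have h2 : ∀ j, ‖(z j : AddCircle (1:ℝ))‖₊ = ‖z j‖₊ := fun j => NNReal.eq (this j)
  simp only [Pi.norm_def, h2]

def E' (s : StarKind) {k : ℕ} (H : SimpleGraph (Fin k)) (γ μbar ε : ℝ) (d : ℕ) (i0 : Fin k) :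
    Set (Ω' k d) :=
  {ω | ‖ω.2.1 i0‖ ≤ 1 ∧ (∀ i, ω.1 i ∈ windowIcc ε 1) ∧
    (∀ i j : Fin k, i < j → dist (ω.2.1 i) (ω.2.1 j) ∈ windowIcc ε 1) ∧
    (∀ i j : Fin k, H.Adj i j →
      ω.2.2 s(i, j) ≤ gcp γ μbar d 1 (ω.1 i) (ω.1 j) (dist (ω.2.1 i) (ω.2.1 j))) ∧
    (∀ i j : Fin k, nonE s H i j →
      gcp γ μbar d 1 (ω.1 i) (ω.1 j) (dist (ω.2.1 i) (ω.2.1 j)) < ω.2.2 s(i, j))}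

lemma mkY_dist {k d : ℕ} (y : Fin k → Fin d → ℝ) (ρ : ℝ) (hρ : 0 < ρ)
    (h : ∀ i, ‖ρ • y i‖ ≤ 1/4) (i j : Fin k) :
    dist (mkY (ρ • y) i) (mkY (ρ • y) j) = ρ * dist (y i) (y j) := by
  have h1 : ‖ρ • y i - ρ • y j‖ ≤ 1/2 := (norm_sub_le _ _).trans (by linarith [h i, h j])
  rw [dist_eq_norm, dist_eq_norm]
  have h2 : mkY (ρ • y) i - mkY (ρ • y) j =
      (fun l => (((ρ • y i - ρ • y j) l : ℝ) : AddCircle (1:ℝ))) := by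
    funext l
    simp [mkY]
  rw [h2, norm_mk, ← smul_sub, norm_smul, Real.norm_eq_abs, abs_of_pos hρ]
  intro l
  exact (norm_le_pi_norm (ρ • y i - ρ • y j) l).trans h1

lemma mkY_norm {k d : ℕ} (y : Fin k → Fin d → ℝ) (ρ : ℝ) (hb : ρ • y ∈ boxJ k d) (i : Fin k) :
    ‖mkY (ρ • y) i‖ = ‖ρ • y i‖ := by
  refine norm_mk d (ρ • y i) fun l => ?_
  have := hb i (Set.mem_univ _) l (Set.mem_univ _)
  have h2 : (ρ • y) i l = (ρ • y i) l := rfl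
  rw [h2] at this
  rw [abs_le]
  exact ⟨by linarith [this.1], by linarith [this.2]⟩

lemma gcp_scale {γ μbar : ℝ} {d n : ℕ} {ρ : ℝ} (hρn : (n:ℝ) * ρ ^ d = 1) (a b r : ℝ) :
    gcp γ μbar d n a b (ρ * r) = gcp γ μbar d 1 a b r := by
  unfold gcp
  have : (n:ℝ) * μbar * (ρ * r) ^ d = ((1:ℕ):ℝ) * μbar * r ^ d := by
    rw [mul_pow]
    calc _ = ((n:ℝ) * ρ ^ d) * (μbar * r ^ d) := by ring
      _ = _ := by rw [hρn]; push_cast; ring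
  rw [this]

lemma win_scale {ε ρ r : ℝ} (hρ : 0 < ρ) : ρ * r ∈ windowIcc ε ρ ↔ r ∈ windowIcc ε 1 := by
  unfold windowIcc
  rw [Set.mem_Icc, Set.mem_Icc]
  have h1 : ε * ρ ≤ ρ * r ↔ ε * 1 ≤ r := by
    rw [mul_comm, mul_one]; exact mul_le_mul_iff_right₀ hρ
  have h2 : ρ * r ≤ ρ / ε ↔ r ≤ 1 / ε := by
    rw [div_eq_mul_one_div]; exact mul_le_mul_iff_right₀ hρ
  rw [h1, h2]

lemma pre_eq {k d : ℕ} (γ μbar : ℝ) (H : SimpleGraph (Fin k)) (s : StarKind)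
    (ε : ℝ) (hε : 0 < ε) (α : Fin k → ℝ) (β : Fin k → Fin k → ℝ) (i0 : Fin k) (n : ℕ) (ρ : ℝ)
    (hρ : 0 < ρ) (hρn : (n:ℝ) * ρ ^ d = 1) (hα : ∀ i, α i = 0)
    (hβ : ∀ i j : Fin k, i < j → (n:ℝ) ^ (β i j) = ρ) (hsm : ρ * (1 + 1 / ε) ≤ 1/4) :
    Phi ρ ⁻¹' (gE s H γ μbar ε α β d n ∩ {ω | ω.2.1 i0 ∈ Metric.closedBall (0 : Torus d) ρ}) ∩
      {ω | ρ • ω.2.1 ∈ boxJ k d} = E' s H γ μbar ε d i0 := by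
  ext ω
  obtain ⟨w, y, cc⟩ := ω
  have hRp : (0:ℝ) < 1 / ε := by positivity
  have hcore : (∀ i, ‖ρ • y i‖ ≤ 1/4) → ((w, mkY (ρ • y), cc) ∈ gE s H γ μbar ε α β d n ↔
      ((∀ i, w i ∈ windowIcc ε 1) ∧
    (∀ i j : Fin k, i < j → dist (y i) (y j) ∈ windowIcc ε 1) ∧
    (∀ i j : Fin k, H.Adj i j →
      cc s(i, j) ≤ gcp γ μbar d 1 (w i) (w j) (dist (y i) (y j))) ∧
    (∀ i j : Fin k, nonE s H i j →
      gcp γ μbar d 1 (w i) (w j) (dist (y i) (y j)) < cc s(i, j)))) := by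
    intro h
    have hd := mkY_dist y ρ hρ h
    have h2 : (∀ i j : Fin k, i < j → ρ * dist (y i) (y j) ∈ windowIcc ε ((n:ℝ) ^ (β i j))) ↔
        (∀ i j : Fin k, i < j → dist (y i) (y j) ∈ windowIcc ε 1) := by
      refine forall_congr' fun i => forall_congr' fun j => forall_congr' fun hij => ?_
      rw [hβ i j hij, win_scale hρ]
    simp only [gE, Set.mem_ofPred_eq, hd, gcp_scale hρn, hα, Real.rpow_zero, h2]
  simp only [Set.mem_inter_iff, Set.mem_preimage, Phi, Set.mem_ofPred_eq, E', Metric.mem_closedBall,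
    dist_zero_right]
  constructor
  · rintro ⟨⟨h1, h2⟩, h3⟩
    have hn := mkY_norm y ρ h3
    have hall : ∀ i, ‖ρ • y i‖ ≤ 1/4 := by
      intro i
      rw [← hn]
      by_cases hi : i = i0
      · subst hi
        refine h2.trans (le_trans ?_ hsm)
        nlinarith
      · have hw : dist (mkY (ρ • y) i) (mkY (ρ • y) i0) ∈ windowIcc ε ρ := by
          refine dist_win (x := mkY (ρ • y)) ?_ i i0 hi
          intro a b hab
          have := h1.2.1 a b hab
          rwa [hβ a b hab] at this
        have h5 := hw.2
        have h6 := dist_triangle (mkY (ρ • y) i) (mkY (ρ • y) i0) 0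
        rw [dist_zero_right, dist_zero_right] at h6
        have : ρ / ε = ρ * (1 / ε) := by ring
        nlinarith
    refine ⟨?_, (hcore hall).1 h1⟩
    rw [hn, norm_smul, Real.norm_eq_abs, abs_of_pos hρ] at h2
    nlinarith
  · rintro ⟨h1, h2⟩
    have hall : ∀ i, ‖ρ • y i‖ ≤ 1/4 := by
      intro i
      rw [norm_smul, Real.norm_eq_abs, abs_of_pos hρ]
      refine le_trans ?_ hsm
      gcongr
      by_cases hi : i = i0
      · subst hi; linarith
      · have hw : dist (y i) (y i0) ≤ 1 / ε := by
          rcases lt_or_gt_of_ne hi with h' | h'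
          · exact (h2.2.1 _ _ h').2
          · rw [dist_comm]; exact (h2.2.1 _ _ h').2
        have h6 := dist_triangle (y i) (y i0) 0
        rw [dist_zero_right, dist_zero_right] at h6
        linarith
    have hbox : ρ • y ∈ boxJ k d := by
      intro i _ l _
      have := (norm_le_pi_norm (ρ • y i) l).trans (hall i)
      rw [Real.norm_eq_abs, abs_le] at this
      have h2 : (ρ • y) i l = (ρ • y i) l := rfl
      rw [h2]
      constructor
      · linarith [this.1]
      · linarith [this.2]
    refine ⟨⟨(hcore hall).2 h2, ?_⟩, hbox⟩
    rw [mkY_norm y ρ hbox, norm_smul, Real.norm_eq_abs, abs_of_pos hρ]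
    nlinarith

lemma gE_prob {k d : ℕ} (γ μbar : ℝ) (μW : Measure ℝ) [IsProbabilityMeasure μW]
    (H : SimpleGraph (Fin k)) (s : StarKind)
    (ε : ℝ) (hε : 0 < ε) (α : Fin k → ℝ) (β : Fin k → Fin k → ℝ) (i0 : Fin k) (n : ℕ) (ρ : ℝ)
    (hρ : 0 < ρ) (hρn : (n:ℝ) * ρ ^ d = 1) (hα : ∀ i, α i = 0)
    (hβ : ∀ i j : Fin k, i < j → (n:ℝ) ^ (β i j) = ρ) (hsm : ρ * (1 + 1 / ε) ≤ 1/4) :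
    (girgMeasure μW d k).real (gE s H γ μbar ε α β d n) =
      (Qm μW k d (E' s H γ μbar ε d i0)).toReal * n / (2 ^ d * (n:ℝ) ^ k) := by
  have hRp : (0:ℝ) < 1 / ε := by positivity
  have hρ2 : ρ ≤ 1/2 := by nlinarith
  have hB : MeasurableSet (Metric.closedBall (0 : Torus d) ρ) := Metric.isClosed_closedBall.measurableSet
  have hX : Measurable (fun ω : GirgΩ d k => ω.2.1 i0) := by fun_prop
  have h1 := girg_avg μW d k i0 _ (gE_measurable s H γ μbar ε α β d n) (by
    intro t ω
    simp only [gE, shiftX, Set.mem_ofPred_eq, dist_add_right]) _ hB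
  have h2 := Phi_meas μW k d ρ hρ (gE s H γ μbar ε α β d n ∩ {ω | ω.2.1 i0 ∈ Metric.closedBall (0 : Torus d) ρ})
    ((gE_measurable s H γ μbar ε α β d n).inter (hX hB))
  rw [pre_eq γ μbar H s ε hε α β i0 n ρ hρ hρn hα hβ hsm, h1] at h2
  rw [h2, ENNReal.toReal_mul, ENNReal.toReal_mul, ENNReal.toReal_ofReal (by positivity),
    ← measureReal_def, ← measureReal_def, vol_ball d 0 ρ hρ.le hρ2, mul_pow]
  have hn : (0:ℝ) < n := by
    rcases (Nat.cast_nonneg n : (0:ℝ) ≤ n).eq_or_lt with h | h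
    · rw [← h] at hρn; simp at hρn
    · exact h
  have hr : ρ ^ d = (n:ℝ)⁻¹ := by field_simp; linarith
  rw [hr, inv_pow, inv_inv]
  field_simp

lemma caseB {k d : ℕ} (hd : 1 ≤ d) (γ μbar : ℝ) (i0 : Fin k)
    (μW : Measure ℝ) [IsProbabilityMeasure μW] 
    (H : SimpleGraph (Fin k)) (s : StarKind)
    (ε : ℝ) (hε : 0 < ε)
    (α : Fin k → ℝ) (β : Fin k → Fin k → ℝ) (hα : ∀ i, α i = 0) 
    (hβ : ∀ i j : Fin k, i < j → β i j = -(1 / (d:ℝ))) :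
    Tendsto (fun n : ℕ =>
        ProbabilityTheory.variance
            (fun ω => (starNM s H γ μbar ε α β d n ω : ℝ)) (girgMeasure μW d n) /
          (∫ ω, (starNM s H γ μbar ε α β d n ω : ℝ) ∂(girgMeasure μW d n)) ^ 2)
      atTop (nhds 0) := by
  classical
  have hd' : (0:ℝ) < d := by exact_mod_cast hd
  have hρt : Tendsto (fun n : ℕ => (n:ℝ) ^ (-(1 / (d:ℝ)))) atTop (nhds 0) :=
    (tendsto_rpow_neg_atTop (by positivity)).comp tendsto_natCast_atTop_atTop
  have hsmall : ∀ᶠ n : ℕ in atTop, (n:ℝ) ^ (-(1 / (d:ℝ))) * (1 + 1 / ε) ≤ 1/4 := by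
    have := hρt.mul_const (1 + 1 / ε)
    rw [zero_mul] at this
    exact (this.eventually_lt_const (by norm_num : (0:ℝ) < 1/4)).mono fun _ h => h.le
  have hρn : ∀ n : ℕ, 0 < n → (n:ℝ) * ((n:ℝ) ^ (-(1 / (d:ℝ)))) ^ d = 1 := by
    intro n hn
    have hn' : (0:ℝ) < n := by exact_mod_cast hn
    rw [← Real.rpow_natCast, ← Real.rpow_mul hn'.le]
    have : -(1 / (d:ℝ)) * d = -1 := by field_simp
    rw [this, Real.rpow_neg_one]
    field_simp
  have hRp : (0:ℝ) < 1 / ε := by positivity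
  refine main_reduction γ μbar μW H s ε α β
    (fun n m => ((4 / ε) ^ d / n) ^ m * (n * (ε / 2) ^ d)) (fun n m => by positivity) ?_ ?_
  · filter_upwards [hsmall, eventually_gt_atTop 0] with n hs hn0 v v' hv hv' hvv
    obtain ⟨a, b, hab⟩ := hvv
    have hn' : (0:ℝ) < n := by exact_mod_cast hn0
    have hr1 := hρn n hn0
    have hρ : 0 < (n:ℝ) ^ (-(1 / (d:ℝ))) := by positivity
    have hβ' : ∀ i j : Fin k, i < j → (n:ℝ) ^ (β i j) = (n:ℝ) ^ (-(1 / (d:ℝ))) :=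
      fun i j hij => by rw [hβ i j hij]
    generalize (n:ℝ) ^ (-(1 / (d:ℝ))) = ρ at hs hr1 hρ hβ'
    have hgen : ∀ (v : Fin k → Fin n) (ω : GirgΩ d n), gproj d v ω ∈ gE s H γ μbar ε α β d n →
        ∀ i j, dist (ω.2.1 (v i)) (ω.2.1 (v j)) ≤ ρ / ε := by
      intro v ω h i j
      by_cases hij : i = j
      · subst hij; rw [dist_self]; positivity
      · refine (dist_win (x := fun i => ω.2.1 (v i)) (ε := ε) (t := ρ) ?_ i j hij).2
        intro i j hij
        have := h.2.1 i j hij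
        rw [hβ' i j hij] at this
        exact this
    have hsub : gproj d v ⁻¹' gE s H γ μbar ε α β d n ∩ gproj d v' ⁻¹' gE s H γ μbar ε α β d n ⊆
        {ω : GirgΩ d n | ∀ u ∈ Finset.univ.image v ∪ Finset.univ.image v',
          dist (ω.2.1 u) (ω.2.1 (v a)) ≤ ρ / ε} := by
      rintro ω ⟨h1, h2⟩ u hu
      simp only [Finset.mem_union, Finset.mem_image, Finset.mem_univ, true_and] at hu
      rcases hu with ⟨i, rfl⟩ | ⟨i, rfl⟩
      · exact hgen v ω h1 i a
      · rw [hab]; exact hgen v' ω h2 i b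
    refine (measureReal_mono hsub).trans ((caseB_up μW d n (v a) _ (ρ / ε) (by positivity) ?_).trans ?_)
    · have : ρ / ε = ρ * (1 / ε) := by ring
      nlinarith
    · apply le_of_eq
      have hr : ρ ^ d = (n:ℝ)⁻¹ := by field_simp; linarith
      have e1 : (4 * (ρ / ε)) ^ d = (4 / ε) ^ d / n := by
        calc _ = (4 / ε) ^ d * ρ ^ d := by rw [← mul_pow]; ring
          _ = _ := by rw [hr]; ring
      have e2 : (2 * (ρ / ε)) ^ d = (n * (ε / 2) ^ d)⁻¹ := by
        calc _ = (ε / 2)⁻¹ ^ d * ρ ^ d := by rw [← mul_pow]; congr 1; field_simp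
          _ = _ := by rw [hr, inv_pow, mul_inv, mul_comm]
      rw [e1, e2, div_inv_eq_mul]
  · set G := (Qm μW k d (E' s H γ μbar ε d i0)).toReal with hG
    have hprob : ∀ᶠ n : ℕ in atTop, (girgMeasure μW d k).real (gE s H γ μbar ε α β d n) =
        G * n / (2 ^ d * (n:ℝ) ^ k) := by
      filter_upwards [hsmall, eventually_gt_atTop 0] with n hs hn0
      have hn' : (0:ℝ) < n := by exact_mod_cast hn0
      exact gE_prob γ μbar μW H s ε hε α β i0 n _ (by positivity) (hρn n hn0) hα
        (fun i j hij => by rw [hβ i j hij]) hs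
    have hG0 : 0 ≤ G := ENNReal.toReal_nonneg
    rcases hG0.eq_or_lt with h0 | h0
    · left
      filter_upwards [hprob] with n hn
      rw [hn, ← h0]; simp
    · right
      refine ⟨fun n => G * n / (2 ^ d * (n:ℝ) ^ k), ?_, ?_⟩
      · filter_upwards [hprob, eventually_gt_atTop 0] with n hn hn0
        have hn' : (0:ℝ) < n := by exact_mod_cast hn0
        exact ⟨by positivity, hn.ge⟩
      · intro m _
        have h2 : Tendsto (fun n : ℕ => ((4 / ε) ^ d) ^ m * (ε / 2) ^ d * (2 ^ d) ^ 2 / G ^ 2 / (n:ℝ))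
            atTop (nhds 0) := tendsto_const_nhds.div_atTop tendsto_natCast_atTop_atTop
        refine h2.congr' ?_
        filter_upwards [eventually_gt_atTop 0] with n hn0
        have hn' : (0:ℝ) < n := by exact_mod_cast hn0
        generalize (4 / ε) ^ d = A
        generalize (ε / 2) ^ d = A'
        rw [div_pow A]
        field_simp

/-- Lemma `selfaveraging`: when `(α,β) ≡ (1/2, 0)` or
`(α,β) ≡ (0, -1/d)`, the count `N^⋆(H; M_ε^{(α,β)})` is self-averaging:
`Var(N)/E[N]² → 0`. -/
theorem girg_count_selfaveraging
    {k d : ℕ} (hd : 1 ≤ d) (τ γ c : ℝ) (hτ : τ ∈ Set.Ioo (2:ℝ) 3) (hγ : 1 < γ)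
    (μW : Measure ℝ) [IsProbabilityMeasure μW] (hW : WeightTail τ c μW)
    (H : SimpleGraph (Fin k)) (s : StarKind)
    (ε : ℝ) (hε : ε ∈ Set.Ioo (0:ℝ) 1)
    (α : Fin k → ℝ) (β : Fin k → Fin k → ℝ)
    (hval : ((∀ i, α i = 1/2) ∧ (∀ i j : Fin k, i < j → β i j = 0)) ∨
            ((∀ i, α i = 0) ∧ (∀ i j : Fin k, i < j → β i j = -(1 / (d:ℝ))))) :
    Tendsto (fun n : ℕ =>
        ProbabilityTheory.variance
            (fun ω => (starNM s H γ (wMean μW) ε α β d n ω : ℝ)) (girgMeasure μW d n) /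
          (∫ ω, (starNM s H γ (wMean μW) ε α β d n ω : ℝ) ∂(girgMeasure μW d n)) ^ 2)
      atTop (nhds 0) := by
  have hγ0 : 0 < γ := by linarith
  have hμ := wMean_pos hτ.1 hW
  rcases hval with ⟨hα, hβ⟩ | ⟨hα, hβ⟩
  · exact caseA τ γ c (wMean μW) hτ hγ0 hμ μW hW H s ε hε α β hα hβ
  · rcases Nat.eq_zero_or_pos k with hk | hk
    · subst hk
      exact caseA τ γ c (wMean μW) hτ hγ0 hμ μW hW H s ε hε α β (fun i => i.elim0) (fun i => i.elim0)
    · exact caseB hd γ (wMean μW) ⟨0, hk⟩ μW H s ε hε.1 α β hα hβ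

end
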